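/- arXiv:2510.25482 — 2 statements merged into one kernel-verified Lean document; each statement's English description precedes it below -/
import Mathlib

section
/- Let P1 and P2 be m×n matrix pencils such that orbᵉ(P2) ⊂ closure(orbᵉ(P1)). Then P2 can be obtained from P1 by changing the canonical blocks of P1 through a finite sequence of structure transitions, each of one of the following six types (a structure transition X ⇝ Y replaces summands X of the Kronecker canonical form by summands Y of the same total size): G1: L_j ⊕ L_k ⇝ L_{j−1} ⊕ L_{k+1} for 1 ≤ j ≤ k; G2: L_jᵀ ⊕ L_kᵀ ⇝ L_{j−1}ᵀ ⊕ L_{k+1}ᵀ for 1 ≤ j ≤ k; G3: L_{j+1} ⊕ E_k(μ) ⇝ L_j ⊕ E_{k+1}(μ) for j,k ≥ 0 and μ ∈ ℂ ∪ {∞}; G4: L_{j+1}ᵀ ⊕ E_k(μ) ⇝ L_jᵀ ⊕ E_{k+1}(μ) for j,k ≥ 0 and μ ∈ ℂ ∪ {∞}; G5: E_{j−1}(μ) ⊕ E_{k+1}(μ) ⇝ E_j(μ) ⊕ E_k(μ) for 1 ≤ j ≤ k and μ ∈ ℂ ∪ {∞}; G6: ⊕_{i=1}^t E_{k_i}(μ_i)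 ⇝ L_p ⊕ L_qᵀ, where p + q + 1 = Σ_{i=1}^t k_i and the μ_i ∈ ℂ ∪ {∞} are pairwise distinct. -/
/-!
Basic framework: a complex `m × n` matrix pencil `A - λ B` is formalized as the
pair `(A, B)` of matrices.  We define strict equivalence, congruence,
skew-symmetry, orbits, direct sums, and the cover relations for the orbit
closure hierarchies (in the Euclidean topology).
-/

open Matrix

noncomputable section

/-- An `m × n` complex matrix pencil `A - λ B`, formalized as the pair `(A, B)`. -/
abbrev Pencil (m n : ℕ) : Type :=
  Matrix (Fin m) (Fin n) ℂ × Matrix (Fin m) (Fin n) ℂ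

namespace Pencil

/-- Strict equivalence of matrix pencils: `Q⁻¹ * A * R = C` and `Q⁻¹ * B * R = D`
for some invertible `Q`, `R`. -/
def StrictEquiv {m n : ℕ} (P Q : Pencil m n) : Prop :=
  ∃ (S : Matrix (Fin m) (Fin m) ℂ) (R : Matrix (Fin n) (Fin n) ℂ),
    IsUnit S ∧ IsUnit R ∧ S⁻¹ * P.1 * R = Q.1 ∧ S⁻¹ * P.2 * R = Q.2

/-- The strict-equivalence orbit of a pencil. -/
def orbE {m n : ℕ} (P : Pencil m n) : Set (Pencil m n) :=
  {Q | StrictEquiv P Q}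

/-- A pencil `A - λ B` is skew-symmetric if `Aᵀ = -A` and `Bᵀ = -B`. -/
def IsSkew {n : ℕ} (P : Pencil n n) : Prop :=
  P.1ᵀ = -P.1 ∧ P.2ᵀ = -P.2

/-- Congruence of (square) matrix pencils: `Sᵀ * A * S = C` and `Sᵀ * B * S = D`
for some invertible `S`. -/
def Congruent {n : ℕ} (P Q : Pencil n n) : Prop :=
  ∃ S : Matrix (Fin n) (Fin n) ℂ,
    IsUnit S ∧ Sᵀ * P.1 * S = Q.1 ∧ Sᵀ * P.2 * S = Q.2

/-- The congruence orbit of a pencil. -/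
def orbC {n : ℕ} (P : Pencil n n) : Set (Pencil n n) :=
  {Q | Congruent P Q}

/-- Direct (block-diagonal) sum of two pencils. -/
def dsum {m n p q : ℕ} (P : Pencil m n) (Q : Pencil p q) : Pencil (m + p) (n + q) :=
  ((fromBlocks P.1 0 0 Q.1).submatrix finSumFinEquiv.symm finSumFinEquiv.symm,
   (fromBlocks P.2 0 0 Q.2).submatrix finSumFinEquiv.symm finSumFinEquiv.symm)

/-- Transport a pencil along equalities of its dimensions. -/
def cast {m n m' n' : ℕ} (hm : m = m') (hn : n = n') (P : Pencil m n) : Pencil m' n' :=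
  (P.1.submatrix (finCongr hm.symm) (finCongr hn.symm),
   P.2.submatrix (finCongr hm.symm) (finCongr hn.symm))

/-- `orbE P1` covers `orbE P2` in the closure hierarchy of strict-equivalence
orbits: `P1` is not strictly equivalent to `P2`, `orbE P2 ⊆ closure (orbE P1)`,
and there is no intermediate orbit strictly between them. -/
def CoversE {m n : ℕ} (P1 P2 : Pencil m n) : Prop :=
  ¬ StrictEquiv P1 P2 ∧ orbE P2 ⊆ closure (orbE P1) ∧
    ¬ ∃ P : Pencil m n, ¬ StrictEquiv P P1 ∧ ¬ StrictEquiv P P2 ∧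
        orbE P ⊆ closure (orbE P1) ∧ orbE P2 ⊆ closure (orbE P)

/-- `orbC P1` covers `orbC P2` in the closure hierarchy of congruence orbits of
skew-symmetric pencils: `P1` is not congruent to `P2`,
`orbC P2 ⊆ closure (orbC P1)`, and there is no congruence orbit of a
skew-symmetric pencil strictly between them. -/
def CoversC {n : ℕ} (P1 P2 : Pencil n n) : Prop :=
  ¬ Congruent P1 P2 ∧ orbC P2 ⊆ closure (orbC P1) ∧
    ¬ ∃ P : Pencil n n, IsSkew P ∧ ¬ Congruent P P1 ∧ ¬ Congruent P P2 ∧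
        orbC P ⊆ closure (orbC P1) ∧ orbC P2 ⊆ closure (orbC P)

end Pencil

/-! Canonical building blocks. -/

/-- The `k × k` Jordan block `J_k(μ)`. -/
def Jmat (k : ℕ) (μ : ℂ) : Matrix (Fin k) (Fin k) ℂ :=
  Matrix.of fun i j => if (j : ℕ) = (i : ℕ) then μ else if (j : ℕ) = (i : ℕ) + 1 then 1 else 0

/-- The `k × (k+1)` matrix `F_k` with ones on the superdiagonal. -/
def Fmat (k : ℕ) : Matrix (Fin k) (Fin (k + 1)) ℂ :=
  Matrix.of fun i j => if (j : ℕ) = (i : ℕ) + 1 then 1 else 0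

/-- The `k × (k+1)` matrix `G_k` with ones on the diagonal. -/
def Gmat (k : ℕ) : Matrix (Fin k) (Fin (k + 1)) ℂ :=
  Matrix.of fun i j => if (j : ℕ) = (i : ℕ) then 1 else 0

/-- The Kronecker block `E_k(μ) = J_k(μ) - λ I_k`. -/
def Eblk (k : ℕ) (μ : ℂ) : Pencil k k := (Jmat k μ, 1)

/-- The Kronecker block `E_k(∞) = I_k - λ J_k(0)`. -/
def EInfblk (k : ℕ) : Pencil k k := (1, Jmat k 0)

/-- The Kronecker block `L_k = F_k - λ G_k`. -/
def Lblk (k : ℕ) : Pencil k (k + 1) := (Fmat k, Gmat k)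

/-- The Kronecker block `L_kᵀ = F_kᵀ - λ G_kᵀ`. -/
def LTblk (k : ℕ) : Pencil (k + 1) k := ((Fmat k)ᵀ, (Gmat k)ᵀ)

/-- The skew-symmetric matrix `[[0, X], [-Xᵀ, 0]]`. -/
def skewPair {p q : ℕ} (X : Matrix (Fin p) (Fin q) ℂ) :
    Matrix (Fin (p + q)) (Fin (p + q)) ℂ :=
  (fromBlocks 0 X (-Xᵀ) 0).submatrix finSumFinEquiv.symm finSumFinEquiv.symm

/-- The skew-symmetric canonical block `H_h(μ)` (size `2h × 2h`). -/
def Hblk (h : ℕ) (μ : ℂ) : Pencil (h + h) (h + h) :=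
  (skewPair (Jmat h μ), skewPair (1 : Matrix (Fin h) (Fin h) ℂ))

/-- The skew-symmetric canonical block `K_k = H_k(∞)` (size `2k × 2k`). -/
def Kblk (k : ℕ) : Pencil (k + k) (k + k) :=
  (skewPair (1 : Matrix (Fin k) (Fin k) ℂ), skewPair (Jmat k 0))

/-- The skew-symmetric canonical block `M_m` (size `(2m+1) × (2m+1)`). -/
def Mblk (m : ℕ) : Pencil (m + (m + 1)) (m + (m + 1)) :=
  (skewPair (Fmat m), skewPair (Gmat m))

/-! Kronecker canonical forms as multisets of block descriptors. -/

/-- Descriptor of a Kronecker canonical block. -/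
inductive KBlock : Type
  | E : ℕ → ℂ → KBlock        -- `E_k(μ)`, `μ ∈ ℂ`
  | Einf : ℕ → KBlock          -- `E_k(∞)`
  | L : ℕ → KBlock             -- `L_k`
  | LT : ℕ → KBlock            -- `L_kᵀ`

namespace KBlock

/-- Number of rows of a block. -/
def rows : KBlock → ℕ
  | E k _ => k
  | Einf k => k
  | L k => k
  | LT k => k + 1

/-- Number of columns of a block. -/
def cols : KBlock → ℕ
  | E k _ => k
  | Einf k => k
  | L k => k + 1
  | LT k => k

/-- The index of a block. -/
def idx : KBlock → ℕ
  | E k _ => k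
  | Einf k => k
  | L k => k
  | LT k => k

/-- A block is valid (may occur in a Kronecker canonical form) if Jordan blocks
have size at least one. -/
def valid : KBlock → Prop
  | E k _ => 1 ≤ k
  | Einf k => 1 ≤ k
  | L _ => True
  | LT _ => True

/-- The pencil corresponding to a block descriptor. -/
def toPencil : (b : KBlock) → Pencil b.rows b.cols
  | E k μ => Eblk k μ
  | Einf k => EInfblk k
  | L k => Lblk k
  | LT k => LTblk k

end KBlock

/-- The block `E_k(μ)` for an eigenvalue `μ ∈ ℂ ∪ {∞}`; `none` encodes `∞`. -/
def Eb : Option ℂ → ℕ → KBlock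
  | some μ, k => KBlock.E k μ
  | none, k => KBlock.Einf k

/-- Total number of rows of a list of blocks. -/
def rowsSum : List KBlock → ℕ
  | [] => 0
  | b :: t => b.rows + rowsSum t

/-- Total number of columns of a list of blocks. -/
def colsSum : List KBlock → ℕ
  | [] => 0
  | b :: t => b.cols + colsSum t

/-- The direct sum of the blocks in a list. -/
def pencilOfList : (l : List KBlock) → Pencil (rowsSum l) (colsSum l)
  | [] => (0, 0)
  | b :: t => Pencil.dsum b.toPencil (pencilOfList t)

/-- `s` is the multiset of blocks of a Kronecker canonical form of `P`, i.e. `P`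
is strictly equivalent to the direct sum of the blocks of `s`. -/
def RepresentsE {m n : ℕ} (P : Pencil m n) (s : Multiset KBlock) : Prop :=
  (∀ b ∈ s, b.valid) ∧
  ∃ (l : List KBlock) (hm : rowsSum l = m) (hn : colsSum l = n),
    (l : Multiset KBlock) = s ∧
    Pencil.StrictEquiv (Pencil.cast hm hn (pencilOfList l)) P

/-- Like `RepresentsE`, but also allowing degenerate (empty) blocks such as
`E_0(μ)` among the summands. -/
def WeakRepresentsE {m n : ℕ} (P : Pencil m n) (s : Multiset KBlock) : Prop :=
  ∃ (l : List KBlock) (hm : rowsSum l = m) (hn : colsSum l = n),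
    (l : Multiset KBlock) = s ∧
    Pencil.StrictEquiv (Pencil.cast hm hn (pencilOfList l)) P

/-- One structure transition of type G1–G6 (Theorem 2.2) on a Kronecker
canonical form, viewed as a multiset of blocks. -/
def TransG (s t : Multiset KBlock) : Prop :=
  -- G1: `L_j ⊕ L_k ⇝ L_{j-1} ⊕ L_{k+1}`, `1 ≤ j ≤ k`
  (∃ (j k : ℕ) (rest : Multiset KBlock), 1 ≤ j ∧ j ≤ k ∧
      s = KBlock.L j ::ₘ KBlock.L k ::ₘ rest ∧
      t = KBlock.L (j - 1) ::ₘ KBlock.L (k + 1) ::ₘ rest) ∨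
  -- G2: `L_jᵀ ⊕ L_kᵀ ⇝ L_{j-1}ᵀ ⊕ L_{k+1}ᵀ`, `1 ≤ j ≤ k`
  (∃ (j k : ℕ) (rest : Multiset KBlock), 1 ≤ j ∧ j ≤ k ∧
      s = KBlock.LT j ::ₘ KBlock.LT k ::ₘ rest ∧
      t = KBlock.LT (j - 1) ::ₘ KBlock.LT (k + 1) ::ₘ rest) ∨
  -- G3: `L_{j+1} ⊕ E_k(μ) ⇝ L_j ⊕ E_{k+1}(μ)`, `μ ∈ ℂ ∪ {∞}`
  (∃ (j k : ℕ) (μ : Option ℂ) (rest : Multiset KBlock),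
      s = KBlock.L (j + 1) ::ₘ Eb μ k ::ₘ rest ∧
      t = KBlock.L j ::ₘ Eb μ (k + 1) ::ₘ rest) ∨
  -- G4: `L_{j+1}ᵀ ⊕ E_k(μ) ⇝ L_jᵀ ⊕ E_{k+1}(μ)`, `μ ∈ ℂ ∪ {∞}`
  (∃ (j k : ℕ) (μ : Option ℂ) (rest : Multiset KBlock),
      s = KBlock.LT (j + 1) ::ₘ Eb μ k ::ₘ rest ∧
      t = KBlock.LT j ::ₘ Eb μ (k + 1) ::ₘ rest) ∨
  -- G5: `E_{j-1}(μ) ⊕ E_{k+1}(μ) ⇝ E_j(μ) ⊕ E_k(μ)`, `1 ≤ j ≤ k`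
  (∃ (j k : ℕ) (μ : Option ℂ) (rest : Multiset KBlock), 1 ≤ j ∧ j ≤ k ∧
      s = Eb μ (j - 1) ::ₘ Eb μ (k + 1) ::ₘ rest ∧
      t = Eb μ j ::ₘ Eb μ k ::ₘ rest) ∨
  -- G6: `⊕ᵢ E_{kᵢ}(μᵢ) ⇝ L_p ⊕ L_qᵀ`, `p + q + 1 = Σ kᵢ`, `μᵢ` pairwise distinct
  (∃ (ek : List (Option ℂ × ℕ)) (p q : ℕ) (rest : Multiset KBlock),
      (ek.map Prod.fst).Nodup ∧
      p + q + 1 = (ek.map Prod.snd).sum ∧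
      s = ↑(ek.map fun x => Eb x.1 x.2) + rest ∧
      t = KBlock.L p ::ₘ KBlock.LT q ::ₘ rest)

/-!
For fixed matrices `S` and `T`, the dimension of the space of matrices `X` with `A X S = B X T` is
upper semicontinuous in the pencil `A - λ B`, constant on orbits and additive over direct sums.
If `S - λ T` is a suitable singular or Jordan block, its values on the canonical blocks are
truncated differences or minima of block indices, so an orbit in the closure of another one
satisfies majorization inequalities between the block indices.  Conversely, while such inequalities
hold between two different lists of blocks, some transition keeps them true: either a singular
block passes one unit of size to a regular block, or the largest Jordan blocks of all eigenvalues
merge into a pair of singular blocks.  Once the numbers and the total sizes of the singular blocks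
agree, what is left is majorization for each kind of blocks separately.  A canonical form exists
because a chain of vectors that is minimal (for singular blocks) or maximal (for Jordan blocks) has
a dual chain of functionals and therefore spans a direct summand.
-/

/-! ### Majorization of multisets of natural numbers -/

section Majorization

/-- The sum of the truncated differences `i - p` over the elements `p` of `a`.  On multisets of
equal cardinality and sum, the pointwise order of `capSum` is the majorization order. -/
def capSum (a : Multiset ℕ) (i : ℕ) : ℕ := (a.map fun p => i - p).sum

/-- The sum of `min i p` over the elements `p` of `a`, that is, the sum of the first `i` parts of
the partition conjugate to `a`. -/
def minSum (a : Multiset ℕ) (i : ℕ) : ℕ := (a.map fun p => min i p).sum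

variable (a : Multiset ℕ)

@[simp] theorem capSum_zero (i : ℕ) : capSum 0 i = 0 := rfl

@[simp] theorem minSum_zero (i : ℕ) : minSum 0 i = 0 := rfl

@[simp] theorem capSum_cons (p i : ℕ) : capSum (p ::ₘ a) i = (i - p) + capSum a i := by
  simp [capSum]

@[simp] theorem minSum_cons (p i : ℕ) : minSum (p ::ₘ a) i = min i p + minSum a i := by
  simp [minSum]

@[simp] theorem capSum_apply_zero : capSum a 0 = 0 := by simp [capSum]

theorem minSum_add_capSum (i : ℕ) : minSum a i + capSum a i = a.card * i := by
  induction a using Multiset.induction_on with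
  | empty => simp
  | cons p a ih =>
    simp only [minSum_cons, capSum_cons, Multiset.card_cons, add_mul, one_mul]
    omega

theorem card_mul_le_capSum_add_sum (i : ℕ) : a.card * i ≤ capSum a i + a.sum := by
  induction a using Multiset.induction_on with
  | empty => simp
  | cons p a ih =>
    simp only [capSum_cons, Multiset.card_cons, add_mul, one_mul, Multiset.sum_cons]
    omega

theorem minSum_le_sum (i : ℕ) : minSum a i ≤ a.sum := by
  have h1 := card_mul_le_capSum_add_sum a i
  have h2 := minSum_add_capSum a i
  omega

theorem minSum_mono : Monotone (minSum a) := fun _ _ h =>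
  Multiset.sum_map_le_sum_map _ _ fun _ _ => min_le_min_right _ h

variable {a}

theorem minSum_eq_sum {i : ℕ} (h : ∀ p ∈ a, p ≤ i) : minSum a i = a.sum := by
  rw [minSum, Multiset.map_congr rfl fun p hp => min_eq_right (h p hp), Multiset.map_id']

theorem capSum_add_sum {i : ℕ} (h : ∀ p ∈ a, p ≤ i) : capSum a i + a.sum = a.card * i := by
  rw [← minSum_add_capSum, minSum_eq_sum h, add_comm]

theorem le_sum_of_mem {p : ℕ} (hp : p ∈ a) : p ≤ a.sum :=
  Multiset.single_le_sum (fun _ _ => Nat.zero_le _) p hp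

theorem sum_le_minSum_of_minSum_le {i j : ℕ} (h : i < j) (hle : minSum a j ≤ minSum a i) :
    a.sum ≤ minSum a i := by
  induction a using Multiset.induction_on with
  | empty => simp
  | cons p a ih =>
    have := minSum_mono a h.le
    simp only [minSum_cons, Multiset.sum_cons] at *
    have := ih (by omega)
    omega

variable (a)

theorem capSum_succ (i : ℕ) : capSum a (i + 1) = capSum a i + a.countP (· ≤ i) := by
  induction a using Multiset.induction_on with
  | empty => simp
  | cons p a ih =>
    simp only [capSum_cons, Multiset.countP_cons]
    split_ifs <;> omega

theorem capSum_add_countP_mul_le (i n : ℕ) :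
    capSum a i + a.countP (· ≤ i) * n ≤ capSum a (i + n) := by
  induction a using Multiset.induction_on with
  | empty => simp
  | cons p a ih =>
    simp only [capSum_cons, Multiset.countP_cons, add_mul]
    split_ifs <;> omega

theorem countP_le_add_countP_Ioc {i j : ℕ} (h : i ≤ j) :
    a.countP (· ≤ i) + a.countP (fun p => i < p ∧ p ≤ j) = a.countP (· ≤ j) := by
  induction a using Multiset.induction_on with
  | empty => simp
  | cons p a ih =>
    simp only [Multiset.countP_cons]
    split_ifs <;> omega

theorem capSum_injective : Function.Injective capSum := fun a b h => by
  have hcount : ∀ i, a.countP (· ≤ i) = b.countP (· ≤ i) := fun i => by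
    have h1 := capSum_succ a i
    rw [h, capSum_succ b i] at h1
    omega
  ext i
  simp only [Multiset.count]
  rcases i with _ | i
  · simpa [eq_comm] using hcount 0
  · have ha := countP_le_add_countP_Ioc a i.le_succ
    have hb := countP_le_add_countP_Ioc b i.le_succ
    have hI : ∀ p, i < p ∧ p ≤ i + 1 ↔ i + 1 = p := fun p => by omega
    simp only [Nat.succ_eq_add_one, hcount, hI] at ha hb
    omega

variable {a}

theorem exists_eq_cons_cons_of_two_le_countP {α : Type*} {p : α → Prop} [DecidablePred p]
    {s : Multiset α} (h : 2 ≤ s.countP p) : ∃ x y r, p x ∧ p y ∧ s = x ::ₘ y ::ₘ r := by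
  obtain ⟨x, hx, hpx⟩ := Multiset.countP_pos.1 (by omega : 0 < s.countP p)
  obtain ⟨t, rfl⟩ := Multiset.exists_cons_of_mem hx
  rw [Multiset.countP_cons_of_pos _ hpx] at h
  obtain ⟨y, hy, hpy⟩ := Multiset.countP_pos.1 (by omega : 0 < t.countP p)
  obtain ⟨r, rfl⟩ := Multiset.exists_cons_of_mem hy
  exact ⟨x, y, r, hpx, hpy, rfl⟩

theorem exists_strict_interval {α : Type*} [PartialOrder α] {f g : ℕ → α} (hle : f ≤ g)
    (h0 : f 0 = g 0) {i N : ℕ} (hi : f i < g i) (hiN : i ≤ N) (hN : f N = g N) :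
    ∃ u v, u < v ∧ f u = g u ∧ f (v + 1) = g (v + 1) ∧
      ∀ j, u < j → j ≤ v → f j < g j := by
  classical
  have hex : ∃ v, i ≤ v ∧ f v = g v := ⟨N, hiN, hN⟩
  obtain ⟨hiv, hv⟩ := Nat.find_spec hex
  have hv_min : ∀ j, i ≤ j → j < Nat.find hex → f j < g j := fun j hij hj =>
    (hle j).lt_of_ne fun h => Nat.find_min hex hj ⟨hij, h⟩
  have hu := Nat.findGreatest_spec (P := fun j => f j = g j) i.zero_le h0
  have hui := Nat.findGreatest_le (P := fun j => f j = g j) i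
  have hu_max : ∀ j, Nat.findGreatest (fun j => f j = g j) i < j → j ≤ i → f j < g j :=
    fun j huj hj => (hle j).lt_of_ne (Nat.findGreatest_is_greatest huj hj)
  generalize Nat.findGreatest (fun j => f j = g j) i = u at hu hui hu_max
  generalize Nat.find hex = v at hiv hv hv_min
  have hne : ∀ {j}, f j = g j → j ≠ i := fun h hj => hi.ne (hj ▸ h)
  have := hne hu
  have := hne hv
  obtain ⟨w, rfl⟩ : ∃ w, v = w + 1 := ⟨v - 1, by omega⟩
  refine ⟨u, w, by omega, hu, hv, fun j huj hj => ?_⟩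
  rcases le_total j i with hji | hji
  · exact hu_max j huj hji
  · exact hv_min j hji (by omega)

/-- One step of majorization: a pair of elements `1 ≤ j ≤ k` is replaced by `j - 1`, `k + 1`. -/
def Spread (a b : Multiset ℕ) : Prop :=
  ∃ (j k : ℕ) (r : Multiset ℕ), 1 ≤ j ∧ j ≤ k ∧ a = j ::ₘ k ::ₘ r ∧ b = (j - 1) ::ₘ (k + 1) ::ₘ r

variable {b : Multiset ℕ}

theorem capSum_eq_of_sum_le (hcard : a.card = b.card) (hsum : a.sum = b.sum) {i : ℕ}
    (hi : b.sum ≤ i) : capSum a i = capSum b i := by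
  have ha := capSum_add_sum (a := a) fun p hp => (le_sum_of_mem hp).trans (hsum ▸ hi)
  have hb := capSum_add_sum (a := b) fun p hp => (le_sum_of_mem hp).trans hi
  rw [hcard] at ha
  omega

/-- Between two consecutive indices where `capSum a` and `capSum b` agree, `capSum a` is steeper
at the right end and flatter at the left end, so `a` has two elements strictly in between. -/
theorem exists_cons_cons_of_capSum_lt (hcard : a.card = b.card) (hsum : a.sum = b.sum)
    (hle : capSum a ≤ capSum b) (hne : a ≠ b) :
    ∃ j k r, 1 ≤ j ∧ j ≤ k ∧ a = j ::ₘ k ::ₘ r ∧ ∀ i, j ≤ i → i ≤ k → capSum a i < capSum b i := by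
  obtain ⟨i₀, hi₀⟩ : ∃ i, capSum a i < capSum b i := by
    by_contra! hcon
    exact hne (capSum_injective (le_antisymm hle hcon))
  obtain ⟨u, v, huv, hu, hv, hlt⟩ := exists_strict_interval hle (by simp) hi₀
    (le_max_left i₀ b.sum) (capSum_eq_of_sum_le hcard hsum (le_max_right _ _))
  have hcount : 2 ≤ a.countP fun p => u < p ∧ p ≤ v := by
    have := countP_le_add_countP_Ioc a huv.le
    have := countP_le_add_countP_Ioc b huv.le
    have := capSum_succ a u
    have := capSum_succ b u
    have := capSum_succ a v
    have := capSum_succ b v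
    have := hlt (u + 1) (by omega) (by omega)
    have := hlt v huv le_rfl
    omega
  obtain ⟨j, k, r, ⟨hj, hj'⟩, ⟨hk, hk'⟩, rfl⟩ := exists_eq_cons_cons_of_two_le_countP hcount
  rcases le_total j k with hjk | hjk
  · exact ⟨j, k, r, by omega, hjk, rfl, fun i _ _ => hlt i (by omega) (by omega)⟩
  · exact ⟨k, j, r, by omega, hjk, Multiset.cons_swap _ _ _,
      fun i _ _ => hlt i (by omega) (by omega)⟩

theorem exists_spread_of_capSum_lt (hcard : a.card = b.card) (hsum : a.sum = b.sum)
    (hle : capSum a ≤ capSum b) (hne : a ≠ b) :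
    ∃ a', Spread a a' ∧ a'.card = b.card ∧ a'.sum = b.sum ∧ capSum a' ≤ capSum b ∧
      capSum a ≤ capSum a' ∧ ∃ i < b.sum, capSum a i < capSum a' i := by
  obtain ⟨j, k, r, hj, hjk, rfl, hlt⟩ := exists_cons_cons_of_capSum_lt hcard hsum hle hne
  refine ⟨(j - 1) ::ₘ (k + 1) ::ₘ r, ⟨j, k, r, hj, hjk, rfl, rfl⟩, by simpa using hcard, ?_,
    fun i => ?_, fun i => ?_, j, ?_, ?_⟩
  · rw [← hsum]
    simp only [Multiset.sum_cons]
    omega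
  · have h1 := hle i
    have h2 := hlt i
    simp only [capSum_cons] at h1 h2 ⊢
    omega
  · simp only [capSum_cons]
    omega
  · by_contra! hjb
    exact (hlt j le_rfl hjk).ne (capSum_eq_of_sum_le hcard hsum hjb)
  · simp only [capSum_cons]
    omega

theorem reflTransGen_spread (hcard : a.card = b.card) (hsum : a.sum = b.sum)
    (hle : capSum a ≤ capSum b) : Relation.ReflTransGen Spread a b := by
  induction hN : ∑ i ∈ Finset.range b.sum, (capSum b i - capSum a i) using Nat.strong_induction_on
    generalizing a with
  | _ N ih =>
    by_cases hab : a = b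
    · rw [hab]
    · obtain ⟨a', haa', hcard', hsum', hle', hmono, i, hi, hlt⟩ :=
        exists_spread_of_capSum_lt hcard hsum hle hab
      have hlt_b : capSum a i < capSum b i := hlt.trans_le (hle' i)
      refine .head haa' (ih _ (hN ▸ Finset.sum_lt_sum (fun j _ => ?_) ⟨i, by simpa, ?_⟩)
        hcard' hsum' hle' rfl)
      · exact Nat.sub_le_sub_left (hmono j) _
      · exact Nat.sub_lt_sub_left hlt_b hlt

theorem exists_largest (a : Multiset ℕ) : ∃ l ∈ 0 ::ₘ a, ∀ p ∈ a, p ≤ l := by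
  obtain ⟨l, hl, hmax⟩ := Multiset.exists_max_image id (Multiset.cons_ne_zero (a := 0) (m := a))
  exact ⟨l, hl, fun p hp => hmax p (Multiset.mem_cons_of_mem hp)⟩

/-- Whether a largest element of `a` may be decreased without violating `capSum a ≤ capSum b`. -/
def HasDecrease (a b : Multiset ℕ) : Prop :=
  ∃ M, M + 1 ∈ a ∧ ∀ i, M < i → capSum a i < capSum b i

theorem hasDecrease_of_sum_lt (hcard : a.card = b.card) (hsum : b.sum < a.sum) :
    HasDecrease a b := by
  obtain ⟨M, hMa, hM⟩ := exists_largest a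
  rcases M with _ | M
  · have := Multiset.sum_eq_zero_iff.2 fun p hp => Nat.le_zero.1 (hM p hp)
    omega
  · refine ⟨M, (Multiset.mem_cons.1 hMa).resolve_left M.succ_ne_zero, fun i hi => ?_⟩
    have ha := capSum_add_sum (a := a) fun p hp => (hM p hp).trans hi
    have hb := card_mul_le_capSum_add_sum b i
    rw [hcard] at ha
    omega

theorem hasDecrease_of_capSum_ne (hle : capSum a ≤ capSum b)
    (hne : ∀ i, (∀ p ∈ a, p ≤ i) → capSum a i ≠ capSum b i) : HasDecrease a b := by
  obtain ⟨M, hMa, hM⟩ := exists_largest a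
  rcases M with _ | M
  · exact absurd (by simp) (hne 0 hM)
  · exact ⟨M, (Multiset.mem_cons.1 hMa).resolve_left M.succ_ne_zero,
      fun i hi => (hle i).lt_of_ne (hne i fun p hp => (hM p hp).trans hi)⟩

theorem exists_last_capSum_eq (hcard : a.card < b.card)
    (hex : ∃ i, (∀ p ∈ a, p ≤ i) ∧ capSum a i = capSum b i) :
    ∃ u, (∀ p ∈ a, p ≤ u) ∧ capSum a u = capSum b u ∧
      ∀ i, u < i → capSum a i ≠ capSum b i := by
  have hbdd : BddAbove {i | (∀ p ∈ a, p ≤ i) ∧ capSum a i = capSum b i} := by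
    refine ⟨b.sum, fun i ⟨hi, heq⟩ => ?_⟩
    have h1 := card_mul_le_capSum_add_sum b i
    have h2 := capSum_add_sum hi
    have h3 : (a.card + 1) * i ≤ b.card * i := Nat.mul_le_mul_right i hcard
    rw [add_mul, one_mul] at h3
    omega
  obtain ⟨u, ⟨hu, heq⟩, hmax⟩ := hbdd.exists_isGreatest_of_nonempty hex
  exact ⟨u, hu, heq, fun i hi h => (hmax ⟨fun p hp => (hu p hp).trans hi.le, h⟩).not_gt hi⟩

/-- The inequalities that let a new element `u` be added to `a`: the first one keeps
`capSum a ≤ capSum b`, the second one controls the total size. -/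
def HasInsert (a b : Multiset ℕ) (u : ℕ) : Prop :=
  (∀ i, capSum a i + (i - u) ≤ capSum b i) ∧ b.card * u + a.sum ≤ a.card * u + b.sum

theorem hasDecrease_or_exists_hasInsert (hcard : a.card < b.card) (hle : capSum a ≤ capSum b) :
    HasDecrease a b ∨ ∃ u, HasInsert a b u := by
  by_cases hex : ∃ i, (∀ p ∈ a, p ≤ i) ∧ capSum a i = capSum b i
  swap
  · push Not at hex
    exact .inl (hasDecrease_of_capSum_ne hle hex)
  obtain ⟨u, hu, heq, hne⟩ := exists_last_capSum_eq hcard hex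
  have hau := capSum_add_sum hu
  have ha : ∀ n, capSum a (u + n) = capSum a u + a.card * n := fun n => by
    have h := capSum_add_sum (i := u + n) fun p hp => (hu p hp).trans (Nat.le_add_right u n)
    rw [mul_add] at h
    omega
  have hcount : a.card + 1 ≤ b.countP (· ≤ u) := by
    have h1 := capSum_succ b u
    have h2 : capSum a (u + 1) < capSum b (u + 1) := (hle _).lt_of_ne (hne _ u.lt_succ_self)
    rw [ha, mul_one] at h2
    omega
  refine .inr ⟨u, fun i => ?_, ?_⟩
  · rcases le_total i u with h | h
    · simpa [Nat.sub_eq_zero_of_le h] using hle i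
    · obtain ⟨n, rfl⟩ := Nat.exists_eq_add_of_le h
      have h1 := capSum_add_countP_mul_le b u n
      have h2 := Nat.mul_le_mul_right n hcount
      rw [ha, heq]
      linarith [Nat.add_sub_cancel_left (n := u) (m := n)]
  · have := card_mul_le_capSum_add_sum b u
    omega

theorem sum_le_of_capSum_le (hcard : a.card = b.card) (hle : capSum a ≤ capSum b) :
    b.sum ≤ a.sum := by
  have ha := capSum_add_sum (i := a.sum + b.sum) fun p (hp : p ∈ a) =>
    (le_sum_of_mem hp).trans (Nat.le_add_right _ _)
  have hb := capSum_add_sum (i := a.sum + b.sum) fun p (hp : p ∈ b) =>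
    (le_sum_of_mem hp).trans (Nat.le_add_left _ _)
  have hab : capSum a (a.sum + b.sum) ≤ capSum b (a.sum + b.sum) := hle _
  rw [hcard] at ha
  omega

theorem sum_le_of_minSum_le (hle : minSum a ≤ minSum b) : a.sum ≤ b.sum := by
  rw [← minSum_eq_sum fun p => le_sum_of_mem (a := a)]
  exact (hle _).trans (minSum_le_sum b _)

/-- Removing a largest element costs `minSum` at most one unit of the gap `N' - N`. -/
theorem minSum_tail_le {q d : Multiset ℕ} {l N N' : ℕ} (hq : ∀ p ∈ q, p ≤ l) (hN : N < N')
    (h : ∀ k, minSum (l ::ₘ q) k + k * N ≤ minSum d k + k * N') (k : ℕ) :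
    minSum q k + k * (N + 1) ≤ minSum d k + k * N' := by
  obtain ⟨c, rfl⟩ := Nat.exists_eq_add_of_lt hN
  rcases le_total k l with hk | hk
  · have h1 := h k
    rw [minSum_cons, min_eq_left hk] at h1
    linarith
  · have h1 := h l
    rw [minSum_cons, min_self, minSum_eq_sum hq] at h1
    have h2 := minSum_le_sum q k
    have h3 := minSum_mono d hk
    have h4 : l * c ≤ k * c := Nat.mul_le_mul_right c hk
    linarith

end Majorization

/-! ### Blocks sorted by kind -/

section Sizes

/-- The kinds of Kronecker blocks: `inl true` is the kind of the blocks `L`, `inl false` that of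
the blocks `Lᵀ`, and `inr μ` that of the blocks `E(μ)`, where `none` encodes `μ = ∞`. -/
abbrev BlockKind : Type := Bool ⊕ Option ℂ

/-- The block of a given kind and index. -/
def block : BlockKind → ℕ → KBlock
  | .inl true, k => .L k
  | .inl false, k => .LT k
  | .inr μ, k => Eb μ k

/-- The kind of a block. -/
def KBlock.kind : KBlock → BlockKind
  | .E _ μ => .inr (some μ)
  | .Einf _ => .inr none
  | .L _ => .inl true
  | .LT _ => .inl false

@[simp] theorem block_kind_idx : ∀ b : KBlock, block b.kind b.idx = b
  | .E _ _ | .Einf _ | .L _ | .LT _ => rfl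

@[simp] theorem kind_block : ∀ (κ : BlockKind) (k : ℕ), (block κ k).kind = κ
  | .inl true, _ | .inl false, _ | .inr none, _ | .inr (some _), _ => rfl

@[simp] theorem idx_block : ∀ (κ : BlockKind) (k : ℕ), (block κ k).idx = k
  | .inl true, _ | .inl false, _ | .inr none, _ | .inr (some _), _ => rfl

open Classical in
/-- The indices of the blocks of kind `κ` in `s`. -/
def sizes (κ : BlockKind) (s : Multiset KBlock) : Multiset ℕ :=
  (s.filter fun b => b.kind = κ).map KBlock.idx

variable {κ κ' : BlockKind} {s t : Multiset KBlock}

@[simp] theorem sizes_zero (κ : BlockKind) : sizes κ 0 = 0 := rfl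

@[simp] theorem sizes_add (κ : BlockKind) (s t : Multiset KBlock) :
    sizes κ (s + t) = sizes κ s + sizes κ t := by
  simp [sizes]

@[simp] theorem sizes_cons_self (κ : BlockKind) (k : ℕ) (s : Multiset KBlock) :
    sizes κ (block κ k ::ₘ s) = k ::ₘ sizes κ s := by
  simp [sizes]

theorem sizes_cons_of_ne (h : κ' ≠ κ) (k : ℕ) (s : Multiset KBlock) :
    sizes κ (block κ' k ::ₘ s) = sizes κ s := by
  simp [sizes, h]

theorem mem_sizes {k : ℕ} : k ∈ sizes κ s ↔ block κ k ∈ s := by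
  simp only [sizes, Multiset.mem_map, Multiset.mem_filter]
  constructor
  · rintro ⟨b, ⟨hb, rfl⟩, rfl⟩
    rwa [block_kind_idx]
  · exact fun h => ⟨_, ⟨h, kind_block κ k⟩, idx_block κ k⟩

theorem sizes_eq_zero (h : ∀ b ∈ s, b.kind ≠ κ) : sizes κ s = 0 :=
  Multiset.eq_zero_of_forall_notMem fun k hk => h _ (mem_sizes.1 hk) (kind_block κ k)

theorem sizes_inl_map_Eb (b : Bool) (m : Multiset (Option ℂ)) (l : Option ℂ → ℕ) :
    sizes (.inl b) (m.map fun μ => Eb μ (l μ)) = 0 := by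
  refine sizes_eq_zero fun x hx => ?_
  obtain ⟨μ, -, rfl⟩ := Multiset.mem_map.1 hx
  exact (kind_block (.inr μ) (l μ)).trans_ne Sum.inr_ne_inl

theorem sizes_inr_map_Eb_of_notMem {m : Multiset (Option ℂ)} {μ : Option ℂ} (hμ : μ ∉ m)
    (l : Option ℂ → ℕ) : sizes (.inr μ) (m.map fun ν => Eb ν (l ν)) = 0 := by
  refine sizes_eq_zero fun x hx hκ => hμ ?_
  obtain ⟨ν, hν, rfl⟩ := Multiset.mem_map.1 hx
  rwa [← Sum.inr_injective ((kind_block (.inr ν) (l ν)).symm.trans hκ)]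

theorem sizes_inr_map_Eb_of_mem {F : Finset (Option ℂ)} {μ : Option ℂ} (hμ : μ ∈ F)
    (l : Option ℂ → ℕ) : sizes (.inr μ) (F.val.map fun ν => Eb ν (l ν)) = {l μ} := by
  classical
  rw [← Multiset.cons_erase hμ, Multiset.map_cons]
  exact (sizes_cons_self (.inr μ) _ _).trans
    (congrArg _ (sizes_inr_map_Eb_of_notMem F.nodup.notMem_erase l))

theorem sum_map_sizes {M : Type*} [AddCommMonoid M] (f : KBlock → M) {K : Finset BlockKind}
    (hK : ∀ b ∈ s, b.kind ∈ K) :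
    ∑ κ ∈ K, ((sizes κ s).map fun k => f (block κ k)).sum = (s.map f).sum := by
  classical
  induction s using Multiset.induction_on with
  | empty => simp
  | cons b s ih =>
    obtain ⟨κ, k, rfl⟩ : ∃ κ k, b = block κ k := ⟨_, _, (block_kind_idx b).symm⟩
    have hb := hK _ (Multiset.mem_cons_self _ s)
    rw [kind_block] at hb
    rw [Multiset.map_cons, Multiset.sum_cons, ← ih fun c hc => hK c (Multiset.mem_cons_of_mem hc),
      ← Finset.add_sum_erase _ _ hb, ← Finset.add_sum_erase K _ hb, ← add_assoc]
    congr 1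
    · rw [sizes_cons_self, Multiset.map_cons, Multiset.sum_cons]
    · refine Finset.sum_congr rfl fun κ' hκ' => ?_
      rw [sizes_cons_of_ne (Finset.ne_of_mem_erase hκ').symm]

theorem sum_map_block_sizes {K : Finset BlockKind} (hK : ∀ b ∈ s, b.kind ∈ K) :
    ∑ κ ∈ K, (sizes κ s).map (block κ) = s := by
  have h := sum_map_sizes (fun b => ({b} : Multiset KBlock)) hK
  rw [Multiset.sum_map_singleton] at h
  refine (Finset.sum_congr rfl fun κ _ => ?_).trans h
  rw [← Multiset.sum_map_singleton ((sizes κ s).map (block κ)), Multiset.map_map]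
  rfl

theorem sum_sizes {K : Finset BlockKind} (hK : ∀ b ∈ s, b.kind ∈ K) :
    ∑ κ ∈ K, (sizes κ s).sum = (s.map KBlock.idx).sum := by
  rw [← sum_map_sizes KBlock.idx hK]
  simp

theorem sum_sizes_eq_of_le (hle : ∀ κ, (sizes κ s).sum ≤ (sizes κ t).sum)
    (hst : (s.map KBlock.idx).sum = (t.map KBlock.idx).sum) (κ : BlockKind) :
    (sizes κ s).sum = (sizes κ t).sum := by
  classical
  let K : Finset BlockKind := insert κ ((s + t).map KBlock.kind).toFinset
  have hK : ∀ b ∈ s + t, b.kind ∈ K := fun b hb =>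
    Finset.mem_insert_of_mem (Multiset.mem_toFinset.2 (Multiset.mem_map_of_mem _ hb))
  rw [← sum_sizes fun b hb => hK b (Multiset.mem_add.2 (.inl hb)),
    ← sum_sizes fun b hb => hK b (Multiset.mem_add.2 (.inr hb))] at hst
  exact (Finset.sum_eq_sum_iff_of_le fun κ _ => hle κ).1 hst κ (Finset.mem_insert_self _ _)

theorem sum_sizes_inl_add_sum_sizes_inr {F : Finset (Option ℂ)}
    (hF : ∀ μ k, block (.inr μ) k ∈ s → μ ∈ F) :
    (sizes (.inl true) s).sum + (sizes (.inl false) s).sum + ∑ μ ∈ F, (sizes (.inr μ) s).sum =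
      (s.map KBlock.idx).sum := by
  rw [← sum_sizes (K := Finset.univ.disjSum F), Finset.sum_disjSum, Fintype.sum_bool]
  intro b hb
  rw [Finset.mem_disjSum]
  rcases hκ : b.kind with c | μ
  · exact .inl ⟨c, Finset.mem_univ c, rfl⟩
  · exact .inr ⟨μ, hF μ b.idx (by rwa [← hκ, block_kind_idx]), rfl⟩

theorem exists_finset_forall_mem (s : Multiset KBlock) :
    ∃ F : Finset (Option ℂ), ∀ μ k, block (.inr μ) k ∈ s → μ ∈ F := by
  classical
  exact ⟨(s.map KBlock.kind).toFinset.toRight, fun μ k h => by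
    simpa using ⟨_, h, kind_block _ _⟩⟩

/-- The zero blocks make up for the eigenvalues in `F` that have no block in `s`. -/
theorem exists_eq_add_of_largest (F : Finset (Option ℂ)) (s : Multiset KBlock) :
    ∃ (l : Option ℂ → ℕ) (r : Multiset KBlock),
      s + F.val.map (Eb · 0) = F.val.map (fun μ => Eb μ (l μ)) + r ∧
      ∀ μ, ∀ p ∈ sizes (.inr μ) s, p ≤ l μ := by
  choose l hl_mem hl using fun μ => exists_largest (sizes (.inr μ) s)
  have hle : F.val.map (fun μ => Eb μ (l μ)) ≤ s + F.val.map (Eb · 0) := by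
    rw [Multiset.le_iff_subset]
    · intro b hb
      obtain ⟨μ, hμ, rfl⟩ := Multiset.mem_map.1 hb
      rcases Multiset.mem_cons.1 (hl_mem μ) with h0 | h
      · exact Multiset.mem_add.2 (.inr (Multiset.mem_map.2 ⟨μ, hμ, by rw [h0]⟩))
      · exact Multiset.mem_add.2 (.inl (mem_sizes.1 h))
    · refine F.nodup.map fun μ ν h => Sum.inr_injective (α := Bool) ?_
      rw [← kind_block (.inr μ) (l μ), ← kind_block (.inr ν) (l ν)]
      exact congrArg KBlock.kind h
  obtain ⟨r, hr⟩ := Multiset.le_iff_exists_add.1 hle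
  exact ⟨l, r, hr, hl⟩

end Sizes

/-! ### Structure transitions up to zero blocks -/

section Degen

/-- Reachability by structure transitions up to zero blocks `E_0(μ)`, which have no rows and no
columns. -/
def Degen (s t : Multiset KBlock) : Prop :=
  ∃ z w : Multiset (Option ℂ),
    Relation.ReflTransGen TransG (s + z.map (Eb · 0)) (t + w.map (Eb · 0))

variable {s t u : Multiset KBlock}

theorem TransG.add_right (h : TransG s t) (u : Multiset KBlock) : TransG (s + u) (t + u) := by
  rcases h with ⟨j, k, r, hj, hjk, rfl, rfl⟩ | ⟨j, k, r, hj, hjk, rfl, rfl⟩ |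
    ⟨j, k, μ, r, rfl, rfl⟩ | ⟨j, k, μ, r, rfl, rfl⟩ | ⟨j, k, μ, r, hj, hjk, rfl, rfl⟩ |
    ⟨ek, p, q, r, hnd, hpq, rfl, rfl⟩
  · exact .inl ⟨j, k, r + u, hj, hjk, by simp, by simp⟩
  · exact .inr <| .inl ⟨j, k, r + u, hj, hjk, by simp, by simp⟩
  · exact .inr <| .inr <| .inl ⟨j, k, μ, r + u, by simp, by simp⟩
  · exact .inr <| .inr <| .inr <| .inl ⟨j, k, μ, r + u, by simp, by simp⟩
  · exact .inr <| .inr <| .inr <| .inr <| .inl ⟨j, k, μ, r + u, hj, hjk, by simp, by simp⟩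
  · exact .inr <| .inr <| .inr <| .inr <| .inr
      ⟨ek, p, q, r + u, hnd, hpq, add_assoc .., by simp⟩

theorem reflTransGen_transG_add_right (h : Relation.ReflTransGen TransG s t)
    (u : Multiset KBlock) : Relation.ReflTransGen TransG (s + u) (t + u) :=
  h.lift (· + u) fun _ _ h => h.add_right u

namespace Degen

theorem of_reflTransGen (h : Relation.ReflTransGen TransG s t) : Degen s t :=
  ⟨0, 0, by simpa using h⟩

theorem of_transG (h : TransG s t) : Degen s t := of_reflTransGen (.single h)

theorem add_zeroBlocks (s : Multiset KBlock) (z : Multiset (Option ℂ)) :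
    Degen s (s + z.map (Eb · 0)) :=
  ⟨z, 0, by simpa using .refl⟩

theorem trans (h : Degen s t) (h' : Degen t u) : Degen s u := by
  obtain ⟨z, w, h⟩ := h
  obtain ⟨z', w', h'⟩ := h'
  have h₁ := reflTransGen_transG_add_right h (z'.map (Eb · 0))
  have h₂ := reflTransGen_transG_add_right h' (w.map (Eb · 0))
  rw [add_right_comm t] at h₁
  exact ⟨z + z', w' + w, by simpa only [Multiset.map_add, add_assoc] using h₁.trans h₂⟩

theorem add_right (h : Degen s t) (u : Multiset KBlock) : Degen (s + u) (t + u) := by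
  obtain ⟨z, w, h⟩ := h
  refine ⟨z, w, ?_⟩
  rw [add_right_comm s, add_right_comm t]
  exact reflTransGen_transG_add_right h u

theorem add {s' t' : Multiset KBlock} (h : Degen s t) (h' : Degen s' t') :
    Degen (s + s') (t + t') :=
  (h.add_right s').trans (by simpa only [add_comm t] using h'.add_right t)

theorem sum {ι : Type*} (F : Finset ι) {f g : ι → Multiset KBlock}
    (h : ∀ i, Degen (f i) (g i)) : Degen (∑ i ∈ F, f i) (∑ i ∈ F, g i) := by
  classical
  induction F using Finset.induction_on with
  | empty => exact of_reflTransGen .refl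
  | insert i F hi ih =>
    rw [Finset.sum_insert hi, Finset.sum_insert hi]
    exact (h i).add ih

theorem of_forall_sizes
    (h : ∀ κ, Degen ((sizes κ s).map (block κ)) ((sizes κ t).map (block κ))) : Degen s t := by
  classical
  let K : Finset BlockKind := ((s + t).map KBlock.kind).toFinset
  have hK : ∀ b ∈ s + t, b.kind ∈ K := fun b hb =>
    Multiset.mem_toFinset.2 (Multiset.mem_map_of_mem _ hb)
  have hsum := Degen.sum K h
  rwa [sum_map_block_sizes fun b hb => hK b (Multiset.mem_add.2 (.inl hb)),
    sum_map_block_sizes fun b hb => hK b (Multiset.mem_add.2 (.inr hb))] at hsum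

end Degen

variable {a b : Multiset ℕ}

theorem Spread.transG_map_inl (h : Spread a b) (c : Bool) :
    TransG (a.map (block (.inl c))) (b.map (block (.inl c))) := by
  obtain ⟨j, k, r, hj, hjk, rfl, rfl⟩ := h
  simp only [Multiset.map_cons]
  cases c
  · exact .inr <| .inl ⟨j, k, _, hj, hjk, rfl, rfl⟩
  · exact .inl ⟨j, k, _, hj, hjk, rfl, rfl⟩

theorem Spread.transG_map_Eb (h : Spread a b) (μ : Option ℂ) :
    TransG (b.map (Eb μ)) (a.map (Eb μ)) := by
  obtain ⟨j, k, r, hj, hjk, rfl, rfl⟩ := h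
  simp only [Multiset.map_cons]
  exact .inr <| .inr <| .inr <| .inr <| .inl ⟨j, k, μ, _, hj, hjk, rfl, rfl⟩

theorem degen_map_inl (c : Bool) (hcard : a.card = b.card) (hsum : a.sum = b.sum)
    (hle : capSum a ≤ capSum b) : Degen (a.map (block (.inl c))) (b.map (block (.inl c))) :=
  .of_reflTransGen ((reflTransGen_spread hcard hsum hle).lift _ fun _ _ h => h.transG_map_inl c)

theorem degen_map_Eb (μ : Option ℂ) (hsum : a.sum = b.sum) (hle : minSum a ≤ minSum b) :
    Degen (a.map (Eb μ)) (b.map (Eb μ)) := by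
  let pad (x : Multiset ℕ) (n : ℕ) : Multiset ℕ := x + .replicate n 0
  have hpad_map (x : Multiset ℕ) (n : ℕ) :
      (pad x n).map (Eb μ) = x.map (Eb μ) + (Multiset.replicate n μ).map (Eb · 0) := by
    simp [pad]
  have hmin (x : Multiset ℕ) (n i : ℕ) : minSum (pad x n) i = minSum x i := by simp [pad, minSum]
  have hcard : (pad b a.card).card = (pad a b.card).card := by simp [pad, add_comm]
  have hcap : capSum (pad b a.card) ≤ capSum (pad a b.card) := fun i => by
    change capSum (pad b a.card) i ≤ capSum (pad a b.card) i
    have ha := minSum_add_capSum (pad a b.card) i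
    have hb := minSum_add_capSum (pad b a.card) i
    have hi : minSum a i ≤ minSum b i := hle i
    rw [hmin] at ha hb
    rw [hcard] at hb
    omega
  have hpath : Relation.ReflTransGen TransG ((pad a b.card).map (Eb μ))
      ((pad b a.card).map (Eb μ)) := by
    rw [← Relation.reflTransGen_swap]
    exact (reflTransGen_spread hcard (by simp [pad, hsum]) hcap).lift _ fun _ _ h =>
      h.transG_map_Eb μ
  rw [hpad_map, hpad_map] at hpath
  exact ⟨_, _, hpath⟩

end Degen

/-! ### Numerical domination -/

section Dominates

/-- The numerical conditions for the pencils with blocks `t` to be limits of pencils with blocks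
`s`. -/
structure Dominates (s t : Multiset KBlock) : Prop where
  capSum_le : ∀ b, capSum (sizes (.inl b) s) ≤ capSum (sizes (.inl b) t)
  minSum_le : ∀ μ k, minSum (sizes (.inr μ) s) k + k * (sizes (.inl true) s).card ≤
    minSum (sizes (.inr μ) t) k + k * (sizes (.inl true) t).card
  /-- The numbers of columns (`b = true`) and of rows (`b = false`) agree. -/
  size_eq : ∀ b, (s.map KBlock.idx).sum + (sizes (.inl b) s).card =
    (t.map KBlock.idx).sum + (sizes (.inl b) t).card

/-- The sum of the indices of the singular blocks. -/
def singularSize (s : Multiset KBlock) : ℕ :=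
  (sizes (.inl true) s).sum + (sizes (.inl false) s).sum

variable {s t r : Multiset KBlock}

@[simp] theorem sizes_inl_cons_inr (b : Bool) (μ : Option ℂ) (k : ℕ) (s : Multiset KBlock) :
    sizes (.inl b) (block (.inr μ) k ::ₘ s) = sizes (.inl b) s :=
  sizes_cons_of_ne Sum.inr_ne_inl k s

@[simp] theorem sizes_inr_cons_inl (b : Bool) (μ : Option ℂ) (k : ℕ) (s : Multiset KBlock) :
    sizes (.inr μ) (block (.inl b) k ::ₘ s) = sizes (.inr μ) s :=
  sizes_cons_of_ne Sum.inl_ne_inr k s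

theorem sizes_inl_cons_of_ne {b c : Bool} (h : b ≠ c) (k : ℕ) (s : Multiset KBlock) :
    sizes (.inl c) (block (.inl b) k ::ₘ s) = sizes (.inl c) s :=
  sizes_cons_of_ne (Sum.inl_injective.ne h) k s

theorem sizes_inr_cons_of_ne {μ ν : Option ℂ} (h : μ ≠ ν) (k : ℕ) (s : Multiset KBlock) :
    sizes (.inr ν) (block (.inr μ) k ::ₘ s) = sizes (.inr ν) s :=
  sizes_cons_of_ne (Sum.inr_injective.ne h) k s

theorem card_sizes_inl_enlarge (b c : Bool) (μ : Option ℂ) (M l : ℕ) (r : Multiset KBlock) :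
    (sizes (.inl c) (block (.inl b) M ::ₘ block (.inr μ) (l + 1) ::ₘ r)).card =
      (sizes (.inl c) (block (.inl b) (M + 1) ::ₘ block (.inr μ) l ::ₘ r)).card := by
  rcases eq_or_ne b c with rfl | h
  · simp
  · simp [sizes_inl_cons_of_ne h]

@[simp] theorem singularSize_cons_inl (b : Bool) (k : ℕ) (s : Multiset KBlock) :
    singularSize (block (.inl b) k ::ₘ s) = k + singularSize s := by
  cases b <;> simp [singularSize, sizes_inl_cons_of_ne] <;> omega

@[simp] theorem singularSize_cons_inr (μ : Option ℂ) (k : ℕ) (s : Multiset KBlock) :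
    singularSize (block (.inr μ) k ::ₘ s) = singularSize s := by
  simp [singularSize]

theorem transG_enlarge (b : Bool) (μ : Option ℂ) (M l : ℕ) (r : Multiset KBlock) :
    TransG (block (.inl b) (M + 1) ::ₘ block (.inr μ) l ::ₘ r)
      (block (.inl b) M ::ₘ block (.inr μ) (l + 1) ::ₘ r) := by
  cases b
  · exact .inr <| .inr <| .inr <| .inl ⟨M, l, μ, r, rfl, rfl⟩
  · exact .inr <| .inr <| .inl ⟨M, l, μ, r, rfl, rfl⟩

theorem transG_merge (F : Finset (Option ℂ)) (l : Option ℂ → ℕ) {u v : ℕ}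
    (huv : u + v + 1 = ∑ μ ∈ F, l μ) (r : Multiset KBlock) :
    TransG (F.val.map (fun μ => Eb μ (l μ)) + r)
      (block (.inl true) u ::ₘ block (.inl false) v ::ₘ r) := by
  refine .inr <| .inr <| .inr <| .inr <| .inr
    ⟨F.toList.map fun μ => (μ, l μ), u, v, r, ?_, ?_, ?_, rfl⟩
  · simpa [Function.comp_def] using F.nodup_toList
  · simpa [Function.comp_def, Finset.sum_map_toList] using huv
  · rw [List.map_map, ← Multiset.map_coe, Finset.coe_toList]
    rfl

theorem exists_sizes_inr_eq_zero (s t : Multiset KBlock) :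
    ∃ μ, sizes (.inr μ) s = 0 ∧ sizes (.inr μ) t = 0 := by
  obtain ⟨F, hF⟩ := exists_finset_forall_mem (s + t)
  obtain ⟨μ, hμ⟩ := Infinite.exists_notMem_finset F
  have hst : sizes (.inr μ) (s + t) = 0 :=
    Multiset.eq_zero_of_forall_notMem fun k hk => hμ (hF μ k (mem_sizes.1 hk))
  rw [sizes_add, add_eq_zero] at hst
  exact ⟨μ, hst⟩

namespace Dominates

theorem cons_zeroBlock (h : Dominates s t) (μ : Option ℂ) :
    Dominates (block (.inr μ) 0 ::ₘ s) t where
  capSum_le b := by simpa using h.capSum_le b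
  minSum_le ν k := by
    rcases eq_or_ne μ ν with rfl | hne
    · simpa using h.minSum_le μ k
    · simpa [sizes_inr_cons_of_ne hne] using h.minSum_le ν k
  size_eq b := by simpa using h.size_eq b

theorem card_add_card_eq (h : Dominates s t) :
    (sizes (.inl true) t).card + (sizes (.inl false) s).card =
      (sizes (.inl true) s).card + (sizes (.inl false) t).card := by
  have hcols := h.size_eq true
  have hrows := h.size_eq false
  omega

theorem card_le (h : Dominates s t) : (sizes (.inl true) s).card ≤ (sizes (.inl true) t).card := by
  obtain ⟨μ, hs, ht⟩ := exists_sizes_inr_eq_zero s t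
  simpa [hs, ht] using h.minSum_le μ 1

theorem enlarge (h : Dominates s t) {b : Bool} {μ : Option ℂ} {M l : ℕ}
    (hs : s = block (.inl b) (M + 1) ::ₘ block (.inr μ) l ::ₘ r)
    (hcap : ∀ i, M < i → capSum (sizes (.inl b) s) i < capSum (sizes (.inl b) t) i)
    (hmin : ∀ k, l < k → minSum (sizes (.inr μ) s) k + k * (sizes (.inl true) s).card <
      minSum (sizes (.inr μ) t) k + k * (sizes (.inl true) t).card) :
    Dominates (block (.inl b) M ::ₘ block (.inr μ) (l + 1) ::ₘ r) t := by
  refine ⟨fun c i => ?_, fun ν k => ?_, fun c => ?_⟩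
  · have hle : capSum (sizes (.inl c) s) i ≤ capSum (sizes (.inl c) t) i := h.capSum_le c i
    rcases eq_or_ne b c with rfl | hne
    · have hlt := hcap i
      simp only [hs, sizes_cons_self, sizes_inl_cons_inr, capSum_cons] at hle hlt ⊢
      omega
    · simpa [hs, sizes_inl_cons_of_ne hne] using hle
  · have hle := h.minSum_le ν k
    rw [card_sizes_inl_enlarge, ← hs]
    rcases eq_or_ne μ ν with rfl | hne
    · have hlt := hmin k
      generalize k * (sizes (.inl true) s).card = n at hle hlt ⊢
      simp only [hs, sizes_cons_self, sizes_inr_cons_inl, minSum_cons] at hle hlt ⊢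
      omega
    · simpa [hs, sizes_inr_cons_of_ne hne] using hle
  · rw [card_sizes_inl_enlarge, ← h.size_eq c, hs]
    simp only [Multiset.map_cons, Multiset.sum_cons, idx_block]
    omega

theorem exists_degen_of_hasDecrease (h : Dominates s t) {b : Bool} {μ : Option ℂ} {l : ℕ}
    (hdec : HasDecrease (sizes (.inl b) s) (sizes (.inl b) t)) (hl : l ∈ 0 ::ₘ sizes (.inr μ) s)
    (hmin : ∀ k, l < k → minSum (sizes (.inr μ) s) k + k * (sizes (.inl true) s).card <
      minSum (sizes (.inr μ) t) k + k * (sizes (.inl true) t).card) :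
    ∃ s', Degen s s' ∧ Dominates s' t ∧
      (sizes (.inl true) s').card = (sizes (.inl true) s).card ∧
      singularSize s' < singularSize s := by
  obtain ⟨M, hM, hcap⟩ := hdec
  obtain ⟨q, rfl⟩ := Multiset.exists_cons_of_mem (mem_sizes.1 hM)
  have hlq : block (.inr μ) l ∈ block (.inr μ) 0 ::ₘ q := by
    rw [← mem_sizes, sizes_cons_self]
    simpa using hl
  obtain ⟨r, hr⟩ := Multiset.exists_cons_of_mem hlq
  have hs : block (.inr μ) 0 ::ₘ block (.inl b) (M + 1) ::ₘ q =
      block (.inl b) (M + 1) ::ₘ block (.inr μ) l ::ₘ r := by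
    rw [Multiset.cons_swap, hr]
  refine ⟨block (.inl b) M ::ₘ block (.inr μ) (l + 1) ::ₘ r, ?_,
    (h.cons_zeroBlock μ).enlarge hs (by simpa using hcap) (by simpa using hmin), ?_, ?_⟩
  · have hzero := Degen.add_zeroBlocks (block (.inl b) (M + 1) ::ₘ q) {μ}
    rw [Multiset.map_singleton, add_comm _ {_}, Multiset.singleton_add] at hzero
    exact hzero.trans (.of_transG (hs ▸ transG_enlarge b μ M l r))
  · rw [card_sizes_inl_enlarge, ← hs, sizes_inl_cons_inr]
  · have hsize := congrArg singularSize hs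
    simp only [singularSize_cons_inl, singularSize_cons_inr] at hsize ⊢
    omega

theorem card_eq (h : Dominates s t)
    (heq : (sizes (.inl true) s).card = (sizes (.inl true) t).card) :
    ∀ b, (sizes (.inl b) s).card = (sizes (.inl b) t).card
  | true => heq
  | false => by
    have := h.card_add_card_eq
    omega

theorem sum_sizes_inl_le (h : Dominates s t)
    (heq : (sizes (.inl true) s).card = (sizes (.inl true) t).card) (b : Bool) :
    (sizes (.inl b) t).sum ≤ (sizes (.inl b) s).sum :=
  sum_le_of_capSum_le (h.card_eq heq b) (h.capSum_le b)

theorem sum_map_idx_eq (h : Dominates s t)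
    (heq : (sizes (.inl true) s).card = (sizes (.inl true) t).card) :
    (s.map KBlock.idx).sum = (t.map KBlock.idx).sum := by
  have := h.size_eq true
  omega

theorem exists_regular_slack (h : Dominates s t)
    (heq : (sizes (.inl true) s).card = (sizes (.inl true) t).card)
    (hlt : singularSize t < singularSize s) :
    ∃ μ, ∃ l ∈ 0 ::ₘ sizes (.inr μ) s, ∀ k, l < k →
      minSum (sizes (.inr μ) s) k + k * (sizes (.inl true) s).card <
        minSum (sizes (.inr μ) t) k + k * (sizes (.inl true) t).card := by
  obtain ⟨μ, hμ⟩ : ∃ μ, (sizes (.inr μ) s).sum < (sizes (.inr μ) t).sum := by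
    by_contra! hle
    have hall := sum_sizes_eq_of_le (s := t) (t := s)
      (Sum.rec (h.sum_sizes_inl_le heq) hle) (h.sum_map_idx_eq heq).symm
    exact hlt.ne (congrArg₂ (· + ·) (hall _) (hall _))
  obtain ⟨l, hl_mem, hl⟩ := exists_largest (sizes (.inr μ) s)
  refine ⟨μ, l, hl_mem, fun k hk => ?_⟩
  have hl_le := h.minSum_le μ l
  rw [minSum_eq_sum hl, heq] at hl_le
  have hs := minSum_le_sum (sizes (.inr μ) s) k
  have hmono := minSum_mono (sizes (.inr μ) t) hk.le
  rw [heq]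
  by_contra hcon
  have ht := sum_le_minSum_of_minSum_le (a := sizes (.inr μ) t) hk (by omega)
  omega

theorem degen_of_singularSize_le (h : Dominates s t)
    (heq : (sizes (.inl true) s).card = (sizes (.inl true) t).card)
    (hle : singularSize s ≤ singularSize t) : Degen s t := by
  have hmin : ∀ μ, minSum (sizes (.inr μ) s) ≤ minSum (sizes (.inr μ) t) := fun μ k => by
    have := h.minSum_le μ k
    rwa [heq, add_le_add_iff_right] at this
  have hsum : ∀ κ, (sizes κ s).sum = (sizes κ t).sum := by
    refine sum_sizes_eq_of_le (Sum.rec (fun b => ?_) fun μ => ?_) (h.sum_map_idx_eq heq)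
    · have := h.sum_sizes_inl_le heq true
      have := h.sum_sizes_inl_le heq false
      unfold singularSize at hle
      cases b <;> omega
    · exact sum_le_of_minSum_le (hmin μ)
  exact .of_forall_sizes <| Sum.rec
    (fun b => degen_map_inl b (h.card_eq heq b) (hsum _) (h.capSum_le b))
    fun μ => degen_map_Eb μ (hsum _) (hmin μ)

/-- The largest blocks of all eigenvalues are big enough to be merged into singular blocks with
the prescribed indices. -/
theorem lt_sum_of_hasInsert (h : Dominates s t)
    (hlt : (sizes (.inl true) s).card < (sizes (.inl true) t).card)
    {F : Finset (Option ℂ)} (hF : ∀ μ k, block (.inr μ) k ∈ s + t → μ ∈ F) {l : Option ℂ → ℕ}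
    (hl : ∀ μ, ∀ p ∈ sizes (.inr μ) s, p ≤ l μ) {u v : ℕ}
    (hu : HasInsert (sizes (.inl true) s) (sizes (.inl true) t) u)
    (hv : HasInsert (sizes (.inl false) s) (sizes (.inl false) t) v) :
    u + v + 1 ≤ ∑ μ ∈ F, l μ := by
  obtain ⟨c, hc⟩ := Nat.exists_eq_add_of_lt hlt
  have hc' : (sizes (.inl false) t).card = (sizes (.inl false) s).card + c + 1 := by
    have := h.card_add_card_eq
    omega
  have hs := sum_sizes_inl_add_sum_sizes_inr fun μ k hk => hF μ k (Multiset.mem_add.2 (.inl hk))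
  have ht := sum_sizes_inl_add_sum_sizes_inr fun μ k hk => hF μ k (Multiset.mem_add.2 (.inr hk))
  have hreg : ∑ μ ∈ F, (sizes (.inr μ) s).sum ≤
      ∑ μ ∈ F, (sizes (.inr μ) t).sum + (c + 1) * ∑ μ ∈ F, l μ := by
    rw [Finset.mul_sum, ← Finset.sum_add_distrib]
    refine Finset.sum_le_sum fun μ _ => ?_
    have hmin := h.minSum_le μ (l μ)
    rw [minSum_eq_sum (hl μ), hc] at hmin
    linarith [minSum_le_sum (sizes (.inr μ) t) (l μ)]
  have hsize := h.size_eq true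
  have hu' := hu.2
  have hv' := hv.2
  rw [hc] at hsize hu'
  rw [hc'] at hv'
  refine Nat.le_of_mul_le_mul_left (c := c + 1) ?_ c.succ_pos
  linarith

theorem minSum_rest_le (h : Dominates s t)
    (hlt : (sizes (.inl true) s).card < (sizes (.inl true) t).card)
    {F : Finset (Option ℂ)} (hF : ∀ μ k, block (.inr μ) k ∈ s → μ ∈ F) {l : Option ℂ → ℕ}
    (hs : s + F.val.map (Eb · 0) = F.val.map (fun μ => Eb μ (l μ)) + r)
    (hl : ∀ μ, ∀ p ∈ sizes (.inr μ) s, p ≤ l μ) (μ : Option ℂ) (k : ℕ) :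
    minSum (sizes (.inr μ) r) k + k * ((sizes (.inl true) s).card + 1) ≤
      minSum (sizes (.inr μ) t) k + k * (sizes (.inl true) t).card := by
  have hinr := congrArg (sizes (.inr μ)) hs
  by_cases hμ : μ ∈ F
  · rw [sizes_add, sizes_add, sizes_inr_map_Eb_of_mem hμ, sizes_inr_map_Eb_of_mem hμ, add_comm,
      Multiset.singleton_add, Multiset.singleton_add] at hinr
    refine minSum_tail_le (l := l μ) (fun p hp => ?_) hlt (fun k => ?_) k
    · rcases Multiset.mem_cons.1 (hinr ▸ Multiset.mem_cons_of_mem hp) with rfl | hp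
      · exact Nat.zero_le _
      · exact hl μ p hp
    · simpa [← hinr] using h.minSum_le μ k
  · have hs0 : sizes (.inr μ) s = 0 :=
      Multiset.eq_zero_of_forall_notMem fun p hp => hμ (hF μ p (mem_sizes.1 hp))
    have hr0 : sizes (.inr μ) r = 0 := by
      simpa [sizes_inr_map_Eb_of_notMem hμ, hs0] using hinr.symm
    rw [hr0, minSum_zero, zero_add]
    exact le_add_left (Nat.mul_le_mul_left k hlt)

theorem merge (h : Dominates s t)
    (hlt : (sizes (.inl true) s).card < (sizes (.inl true) t).card)
    {F : Finset (Option ℂ)} (hF : ∀ μ k, block (.inr μ) k ∈ s → μ ∈ F) {l : Option ℂ → ℕ}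
    (hs : s + F.val.map (Eb · 0) = F.val.map (fun μ => Eb μ (l μ)) + r)
    (hl : ∀ μ, ∀ p ∈ sizes (.inr μ) s, p ≤ l μ) {u v : ℕ} (huv : u + v + 1 = ∑ μ ∈ F, l μ)
    (hu : ∀ i, capSum (sizes (.inl true) s) i + (i - u) ≤ capSum (sizes (.inl true) t) i)
    (hv : ∀ i, capSum (sizes (.inl false) s) i + (i - v) ≤ capSum (sizes (.inl false) t) i) :
    Dominates (block (.inl true) u ::ₘ block (.inl false) v ::ₘ r) t ∧
      (sizes (.inl true) (block (.inl true) u ::ₘ block (.inl false) v ::ₘ r)).card =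
        (sizes (.inl true) s).card + 1 := by
  have hinl : ∀ b, sizes (.inl b) r = sizes (.inl b) s := fun b => by
    simpa [sizes_inl_map_Eb] using (congrArg (sizes (.inl b)) hs).symm
  have htrue : sizes (.inl true) (block (.inl true) u ::ₘ block (.inl false) v ::ₘ r) =
      u ::ₘ sizes (.inl true) s := by
    rw [sizes_cons_self, sizes_inl_cons_of_ne Bool.false_ne_true, hinl]
  have hfalse : sizes (.inl false) (block (.inl true) u ::ₘ block (.inl false) v ::ₘ r) =
      v ::ₘ sizes (.inl false) s := by
    rw [sizes_inl_cons_of_ne Bool.false_ne_true.symm, sizes_cons_self, hinl]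
  have hidx : ∑ μ ∈ F, l μ + (r.map KBlock.idx).sum = (s.map KBlock.idx).sum := by
    have hEb : ∀ μ k, (Eb μ k).idx = k := fun μ => idx_block (.inr μ)
    simpa [hEb] using (congrArg (fun x => (x.map KBlock.idx).sum) hs).symm
  refine ⟨⟨Bool.forall_bool.2 ⟨fun i => ?_, fun i => ?_⟩, fun μ k => ?_, fun b => ?_⟩, ?_⟩
  · rw [hfalse, capSum_cons, add_comm]
    exact hv i
  · rw [htrue, capSum_cons, add_comm]
    exact hu i
  · rw [htrue, sizes_inr_cons_inl, sizes_inr_cons_inl, Multiset.card_cons]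
    exact h.minSum_rest_le hlt hF hs hl μ k
  · rw [← h.size_eq b, ← hidx, ← huv]
    cases b <;> simp only [htrue, hfalse, Multiset.map_cons, Multiset.sum_cons, idx_block,
      Multiset.card_cons] <;> ring
  · rw [htrue, Multiset.card_cons]

theorem exists_degen_of_hasInsert (h : Dominates s t)
    (hlt : (sizes (.inl true) s).card < (sizes (.inl true) t).card) {u v : ℕ}
    (hu : HasInsert (sizes (.inl true) s) (sizes (.inl true) t) u)
    (hv : HasInsert (sizes (.inl false) s) (sizes (.inl false) t) v) :
    ∃ s', Degen s s' ∧ Dominates s' t ∧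
      (sizes (.inl true) s').card = (sizes (.inl true) s).card + 1 := by
  obtain ⟨F, hF⟩ := exists_finset_forall_mem (s + t)
  obtain ⟨l, r, hs, hl⟩ := exists_eq_add_of_largest F s
  obtain ⟨w, hw⟩ := Nat.exists_eq_add_of_le (h.lt_sum_of_hasInsert hlt hF hl hu hv)
  have huv : u + (v + w) + 1 = ∑ μ ∈ F, l μ := by omega
  obtain ⟨hdom, hcard⟩ := h.merge hlt (fun μ k hk => hF μ k (Multiset.mem_add.2 (.inl hk))) hs hl
    huv hu.1 fun i => (Nat.add_le_add_left (by omega) _).trans (hv.1 i)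
  exact ⟨_, (Degen.add_zeroBlocks s F.val).trans (hs ▸ .of_transG (transG_merge F l huv r)), hdom,
    hcard⟩

/-- Progress is measured by the number of missing singular blocks, then by the singular size. -/
theorem exists_degen_step (h : Dominates s t) : Degen s t ∨ ∃ s', Degen s s' ∧ Dominates s' t ∧
    ((sizes (.inl true) s).card < (sizes (.inl true) s').card ∨
      (sizes (.inl true) s').card = (sizes (.inl true) s).card ∧
        singularSize s' < singularSize s) := by
  rcases h.card_le.eq_or_lt with heq | hlt
  · rcases le_or_gt (singularSize s) (singularSize t) with hle | hgt
    · exact .inl (h.degen_of_singularSize_le heq hle)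
    obtain ⟨b, hb⟩ : ∃ b, (sizes (.inl b) t).sum < (sizes (.inl b) s).sum := by
      by_contra! hle
      exact hgt.not_ge (Nat.add_le_add (hle true) (hle false))
    obtain ⟨μ, l, hl, hmin⟩ := h.exists_regular_slack heq hgt
    obtain ⟨s', h₁, h₂, h₃⟩ := h.exists_degen_of_hasDecrease
      (hasDecrease_of_sum_lt (h.card_eq heq b) hb) hl hmin
    exact .inr ⟨s', h₁, h₂, .inr h₃⟩
  · have hlt_b : ∀ b, (sizes (.inl b) s).card < (sizes (.inl b) t).card := by
      have := h.card_add_card_eq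
      rintro (_ | _) <;> omega
    by_cases hdec : ∃ b, HasDecrease (sizes (.inl b) s) (sizes (.inl b) t)
    · obtain ⟨b, hb⟩ := hdec
      obtain ⟨μ, hs, ht⟩ := exists_sizes_inr_eq_zero s t
      obtain ⟨s', h₁, h₂, h₃⟩ := h.exists_degen_of_hasDecrease (μ := μ) (l := 0) hb
        (Multiset.mem_cons_self _ _)
        fun k hk => by simpa [hs, ht] using Nat.mul_lt_mul_of_pos_left hlt hk
      exact .inr ⟨s', h₁, h₂, .inr h₃⟩
    · choose u hu using fun b => (hasDecrease_or_exists_hasInsert (hlt_b b)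
        (h.capSum_le b)).resolve_left fun hb => hdec ⟨b, hb⟩
      obtain ⟨s', h₁, h₂, h₃⟩ := h.exists_degen_of_hasInsert hlt (hu true) (hu false)
      exact .inr ⟨s', h₁, h₂, .inl (by omega)⟩

theorem degen {s t : Multiset KBlock} (h : Dominates s t) : Degen s t := by
  rcases h.exists_degen_step with hst | ⟨s', hss', hs't, _⟩
  · exact hst
  · exact hss'.trans hs't.degen
termination_by ((sizes (.inl true) t).card - (sizes (.inl true) s).card, singularSize s)
decreasing_by
  have := hs't.card_le
  rw [Prod.lex_def]
  dsimp only
  omega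

end Dominates

end Dominates

/-! ### Intertwiners of pencils -/

section Intertwiners

variable {K : Type*} [Field K] {m n m' n' k k' : Type*} [Fintype n] [Fintype n'] [Fintype k]

/-- The map `X ↦ A X s - B X t` attached to the pencils `A - λ B` and `s - λ t`, as a linear
function of `(A, B)`. -/
def intertwinerMap (s t : Matrix k k' K) :
    Matrix m n K × Matrix m n K →ₗ[K] Matrix n k K →ₗ[K] Matrix m k' K :=
  LinearMap.mk₂ K (fun P X => P.1 * X * s - P.2 * X * t)
    (fun P Q X => by simp only [Prod.fst_add, Prod.snd_add, Matrix.add_mul]; abel)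
    (fun c P X => by simp [smul_sub])
    (fun P X Y => by simp only [Matrix.mul_add, Matrix.add_mul]; abel)
    (fun c P X => by simp [smul_sub])

/-- The space of the matrices `X` such that `A X s = B X t`. -/
def intertwiners (P : Matrix m n K × Matrix m n K) (s t : Matrix k k' K) :
    Submodule K (Matrix n k K) :=
  LinearMap.ker (intertwinerMap s t P)

/-- The dimension of the space of intertwiners of `P` and `s - λ t`. These numbers, for suitable
`s` and `t`, are the invariants of `P` that are semicontinuous and determine its blocks. -/
def nullity (P : Matrix m n K × Matrix m n K) (s t : Matrix k k' K) : ℕ :=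
  Module.finrank K (intertwiners P s t)

@[simp] theorem mem_intertwiners {P : Matrix m n K × Matrix m n K} {s t : Matrix k k' K}
    {X : Matrix n k K} : X ∈ intertwiners P s t ↔ P.1 * X * s = P.2 * X * t :=
  sub_eq_zero

theorem nullity_swap (A B : Matrix m n K) (s t : Matrix k k' K) :
    nullity (A, B) s t = nullity (B, A) t s := by
  have : intertwiners (A, B) s t = intertwiners (B, A) t s := by
    ext X
    simp only [mem_intertwiners, eq_comm]
  rw [nullity, this, nullity]

theorem nullity_eq_zero_iff {P : Matrix m n K × Matrix m n K} {s t : Matrix k k' K} :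
    nullity P s t = 0 ↔ ∀ X : Matrix n k K, P.1 * X * s = P.2 * X * t → X = 0 := by
  rw [nullity, Submodule.finrank_eq_zero, Submodule.eq_bot_iff]
  simp only [mem_intertwiners]

theorem nullity_congr {P : Matrix m n K × Matrix m n K} {Q : Matrix m' n' K × Matrix m' n' K}
    {s t : Matrix k k' K} (φ : Matrix n k K ≃ₗ[K] Matrix n' k K)
    (h : ∀ X, P.1 * X * s = P.2 * X * t ↔ Q.1 * φ X * s = Q.2 * φ X * t) :
    nullity P s t = nullity Q s t := by
  have : intertwiners P s t = (intertwiners Q s t).comap φ.toLinearMap := by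
    ext X
    simp [h]
  rw [nullity, this]
  exact (φ.ofSubmodule' (intertwiners Q s t)).finrank_eq

theorem nullity_submatrix (P : Matrix m n K × Matrix m n K) (s t : Matrix k k' K) (e : m' ≃ m)
    (f : n' ≃ n) :
    nullity (P.1.submatrix e f, P.2.submatrix e f) s t = nullity P s t := by
  refine nullity_congr (Matrix.reindexLinearEquiv K K f (Equiv.refl k)) fun X => ?_
  have key : ∀ (C : Matrix m n K) (u : Matrix k k' K),
      C.submatrix e f * X * u = (C * X.submatrix f.symm id * u).submatrix e id := fun C u => by
    rw [← Matrix.submatrix_mul_equiv (C * _) u e (Equiv.refl k) id, Equiv.coe_refl,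
      ← Matrix.submatrix_mul_equiv C _ e f id]
    simp
  rw [key, key]
  exact (Matrix.reindex e.symm (Equiv.refl k')).injective.eq_iff
    (a := P.1 * X.submatrix f.symm id * s) (b := P.2 * X.submatrix f.symm id * t)

theorem nullity_mul [Fintype m] [DecidableEq m] [DecidableEq n] (P : Matrix m n K × Matrix m n K)
    (s t : Matrix k k' K) {S : Matrix m m K} {R : Matrix n n K} (hS : IsUnit S) (hR : IsUnit R) :
    nullity (S * P.1 * R, S * P.2 * R) s t = nullity P s t := by
  obtain ⟨u, rfl⟩ := hR
  have := hS.invertible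
  let φ : Matrix n k K ≃ₗ[K] Matrix n k K :=
    { toFun := fun X => u.1 * X
      invFun := fun X => u⁻¹.1 * X
      map_add' := Matrix.mul_add _
      map_smul' := fun c X => Matrix.mul_smul _ c X
      left_inv := fun X => by simp [← Matrix.mul_assoc]
      right_inv := fun X => by simp [← Matrix.mul_assoc] }
  refine nullity_congr φ fun X => ?_
  change S * P.1 * u.1 * X * s = S * P.2 * u.1 * X * t ↔
    P.1 * (u.1 * X) * s = P.2 * (u.1 * X) * t
  simp only [Matrix.mul_assoc]
  exact Matrix.mul_right_inj_of_invertible S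

theorem nullity_fromBlocks (P : Matrix m n K × Matrix m n K) (Q : Matrix m' n' K × Matrix m' n' K)
    (s t : Matrix k k' K) :
    nullity (fromBlocks P.1 0 0 Q.1, fromBlocks P.2 0 0 Q.2) s t =
      nullity P s t + nullity Q s t := by
  have key : ∀ (C : Matrix m n K) (C' : Matrix m' n' K) (X : Matrix (n ⊕ n') k K)
      (u : Matrix k k' K),
      fromBlocks C 0 0 C' * X * u = fromRows (C * X.toRows₁ * u) (C' * X.toRows₂ * u) := by
    intro C C' X u
    conv_lhs => rw [← Matrix.fromRows_toRows X]
    rw [← Matrix.fromRows_mul, Matrix.fromBlocks_mul_fromRows]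
    simp
  have hmem : ∀ X : Matrix (n ⊕ n') k K,
      X ∈ intertwiners (fromBlocks P.1 0 0 Q.1, fromBlocks P.2 0 0 Q.2) s t ↔
        X.toRows₁ ∈ intertwiners P s t ∧ X.toRows₂ ∈ intertwiners Q s t := fun X => by
    simp only [mem_intertwiners, key, Matrix.fromRows_inj.eq_iff]
  rw [nullity, nullity, nullity, ← Module.finrank_prod]
  exact LinearEquiv.finrank_eq
    { toFun := fun X => (⟨X.1.toRows₁, ((hmem X).1 X.2).1⟩, ⟨X.1.toRows₂, ((hmem X).1 X.2).2⟩)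
      invFun := fun Y => ⟨fromRows Y.1 Y.2, (hmem _).2 ⟨by simp, by simp⟩⟩
      map_add' := fun _ _ => rfl
      map_smul' := fun _ _ => rfl
      left_inv := fun X => by simp
      right_inv := fun Y => by simp }

end Intertwiners

/-! ### Invariants of pencils -/

namespace Pencil

variable {m n p q : ℕ}

/-- The transposed pencil. -/
def tr (P : Pencil m n) : Pencil n m := (P.1ᵀ, P.2ᵀ)

theorem tr_dsum (P : Pencil m n) (Q : Pencil p q) : (dsum P Q).tr = dsum P.tr Q.tr := by
  simp [tr, dsum, Matrix.fromBlocks_transpose]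

theorem StrictEquiv.tr {P Q : Pencil m n} (h : StrictEquiv P Q) : StrictEquiv P.tr Q.tr := by
  obtain ⟨S, R, hS, hR, h1, h2⟩ := h
  have hinv : ((R⁻¹)ᵀ)⁻¹ = Rᵀ := by
    rw [← Matrix.transpose_nonsing_inv,
      Matrix.nonsing_inv_nonsing_inv _ ((Matrix.isUnit_iff_isUnit_det _).1 hR)]
  refine ⟨(R⁻¹)ᵀ, (S⁻¹)ᵀ, ?_, ?_, ?_, ?_⟩
  · rwa [Matrix.isUnit_transpose, Matrix.isUnit_nonsing_inv_iff]
  · rwa [Matrix.isUnit_transpose, Matrix.isUnit_nonsing_inv_iff]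
  · simp [Pencil.tr, ← h1, hinv, Matrix.mul_assoc]
  · simp [Pencil.tr, ← h2, hinv, Matrix.mul_assoc]

theorem tr_mem_closure {P Q : Pencil m n} (h : Q ∈ closure (orbE P)) :
    Q.tr ∈ closure (orbE P.tr) :=
  map_mem_closure (f := tr) (continuous_fst.matrix_transpose.prodMk continuous_snd.matrix_transpose)
    h fun _ hM => hM.tr

theorem StrictEquiv.nullity_eq {k k' : Type*} [Fintype k] {P Q : Pencil m n} (h : StrictEquiv P Q)
    (s t : Matrix k k' ℂ) : nullity P s t = nullity Q s t := by
  obtain ⟨S, R, hS, hR, h1, h2⟩ := h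
  rw [← nullity_mul P s t (Matrix.isUnit_nonsing_inv_iff.2 hS) hR, h1, h2]

theorem nullity_dsum {k k' : Type*} [Fintype k] (P : Pencil m n) (Q : Pencil p q)
    (s t : Matrix k k' ℂ) : nullity (dsum P Q) s t = nullity P s t + nullity Q s t :=
  (nullity_submatrix (fromBlocks P.1 0 0 Q.1, fromBlocks P.2 0 0 Q.2) s t _ _).trans
    (nullity_fromBlocks P Q s t)

attribute [local instance] Matrix.normedAddCommGroup Matrix.normedSpace in
theorem nullity_le_of_mem_closure {k k' : Type*} [Fintype k] [Finite k'] {P Q : Pencil m n}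
    (h : Q ∈ closure (orbE P)) (s t : Matrix k k' ℂ) : nullity P s t ≤ nullity Q s t := by
  cases nonempty_fintype k'
  let r := Module.finrank ℂ (LinearMap.range (intertwinerMap s t Q))
  have hcont : Continuous fun M : Pencil m n => (intertwinerMap s t M).toContinuousLinearMap :=
    (LinearMap.toContinuousLinearMap.toLinearMap ∘ₗ
      intertwinerMap s t).continuous_of_finiteDimensional
  have hopen := (isOpen_setOfPred_nat_le_rank (𝕜 := ℂ) (E := Matrix (Fin n) k ℂ)
    (F := Matrix (Fin m) k' ℂ) r).preimage hcont
  obtain ⟨M, hM, hPM⟩ := mem_closure_iff.1 h _ hopen (Module.finrank_eq_rank ℂ _).le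
  have hrank : r ≤ Module.finrank ℂ (LinearMap.range (intertwinerMap s t M)) :=
    Nat.cast_le.1 (hM.trans_eq (Module.finrank_eq_rank ℂ _).symm)
  have hQ := LinearMap.finrank_range_add_finrank_ker (intertwinerMap s t Q)
  have hM := LinearMap.finrank_range_add_finrank_ker (intertwinerMap s t M)
  rw [hPM.nullity_eq, nullity, nullity, intertwiners, intertwiners]
  lia

end Pencil

namespace WeakRepresentsE

variable {m n : ℕ} {P : Pencil m n} {s : Multiset KBlock}

theorem eq_sum_of_additive {M : Type*} [AddCommMonoid M] (h : WeakRepresentsE P s)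
    (f : ∀ m n, Pencil m n → M) (zero : f 0 0 0 = 0)
    (add : ∀ m n p q (P : Pencil m n) (Q : Pencil p q), f _ _ (P.dsum Q) = f m n P + f p q Q)
    (congr : ∀ m n (P Q : Pencil m n), P.StrictEquiv Q → f m n P = f m n Q) :
    f m n P = (s.map fun b => f _ _ b.toPencil).sum := by
  obtain ⟨l, rfl, rfl, rfl, hP⟩ := h
  rw [← congr _ _ _ _ hP, Multiset.map_coe, Multiset.sum_coe]
  change f _ _ (pencilOfList l) = _
  clear hP P
  induction l with
  | nil => exact zero
  | cons b l ih => rw [List.map_cons, List.sum_cons, ← ih, ← add, pencilOfList]; rfl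

theorem rows_eq (h : WeakRepresentsE P s) : m = (s.map KBlock.rows).sum :=
  h.eq_sum_of_additive (fun m _ _ => m) rfl (fun _ _ _ _ _ _ => rfl) fun _ _ _ _ _ => rfl

theorem cols_eq (h : WeakRepresentsE P s) : n = (s.map KBlock.cols).sum :=
  h.eq_sum_of_additive (fun _ n _ => n) rfl (fun _ _ _ _ _ _ => rfl) fun _ _ _ _ _ => rfl

variable {k k' : Type*} [Fintype k]

theorem nullity_eq (h : WeakRepresentsE P s) (u v : Matrix k k' ℂ) :
    nullity P u v = (s.map fun b => nullity b.toPencil u v).sum :=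
  h.eq_sum_of_additive (fun _ _ P => nullity P u v)
    (nullity_eq_zero_iff.2 fun _ _ => Subsingleton.elim _ _)
    (fun _ _ _ _ P Q => P.nullity_dsum Q u v) fun _ _ _ _ h => h.nullity_eq u v

theorem nullity_tr_eq (h : WeakRepresentsE P s) (u v : Matrix k k' ℂ) :
    nullity P.tr u v = (s.map fun b => nullity b.toPencil.tr u v).sum :=
  h.eq_sum_of_additive (fun _ _ P => nullity P.tr u v)
    (nullity_eq_zero_iff.2 fun _ _ => Subsingleton.elim _ _)
    (fun _ _ _ _ P Q => by rw [Pencil.tr_dsum, Pencil.nullity_dsum])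
    fun _ _ _ _ h => h.tr.nullity_eq u v

end WeakRepresentsE

/-! ### Nullities of the canonical blocks -/

section BlockNullities

open Polynomial

theorem Fmat_row {p : ℕ} (j : Fin p) : Fmat p j = Pi.single j.succ 1 := by
  ext c
  simp [Fmat, Pi.single_apply, Fin.ext_iff]

theorem Gmat_row {p : ℕ} (j : Fin p) : Gmat p j = Pi.single j.castSucc 1 := by
  ext c
  simp [Gmat, Pi.single_apply, Fin.ext_iff]

theorem Fmat_mul {k : Type*} {p : ℕ} (X : Matrix (Fin (p + 1)) k ℂ) :
    Fmat p * X = X.submatrix Fin.succ id :=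
  funext fun j => by rw [Matrix.mul_apply_eq_vecMul, Fmat_row, Matrix.single_one_vecMul]; rfl

theorem Gmat_mul {k : Type*} {p : ℕ} (X : Matrix (Fin (p + 1)) k ℂ) :
    Gmat p * X = X.submatrix Fin.castSucc id :=
  funext fun j => by rw [Matrix.mul_apply_eq_vecMul, Gmat_row, Matrix.single_one_vecMul]; rfl

theorem Jmat_eq_add (k : ℕ) (μ : ℂ) : Jmat k μ = μ • 1 + Jmat k 0 := by
  ext i j
  by_cases h : i = j
  · simp [Jmat, h]
  · simp [Jmat, h, Fin.val_ne_of_ne (Ne.symm h)]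

theorem isUnit_smul_one_add_smul_Jmat {a : ℂ} (ha : a ≠ 0) (b : ℂ) (k : ℕ) :
    IsUnit (a • (1 : Matrix (Fin k) (Fin k) ℂ) + b • Jmat k 0) := by
  rw [Matrix.isUnit_iff_isUnit_det, Matrix.det_of_isUpperTriangular]
  · simp [Jmat, ha]
  · intro i j (hij : j < i)
    have h : (j : ℕ) ≠ i + 1 := by lia
    simp [Jmat, hij.ne', h]

theorem Jmat_zero_mul_castSucc {k : Type*} {l : ℕ} (X : Matrix (Fin (l + 1)) k ℂ) (j : Fin l) :
    (Jmat (l + 1) 0 * X) j.castSucc = X j.succ := by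
  have hrow : Jmat (l + 1) 0 j.castSucc = Pi.single j.succ 1 := by
    ext c
    have (h : (c : ℕ) = j) : ¬ (c : ℕ) = j + 1 := by lia
    simpa [Jmat, Pi.single_apply, Fin.ext_iff] using this
  rw [Matrix.mul_apply_eq_vecMul, hrow, Matrix.single_one_vecMul]
  rfl

theorem Jmat_zero_mul_last {k : Type*} {l : ℕ} (X : Matrix (Fin (l + 1)) k ℂ) :
    (Jmat (l + 1) 0 * X) (Fin.last l) = 0 := by
  have hrow : Jmat (l + 1) 0 (Fin.last l) = 0 := by
    ext c
    simp [Jmat, c.is_lt.ne]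
  rw [Matrix.mul_apply_eq_vecMul, hrow, Matrix.zero_vecMul]

theorem Jmat_zero_pow_apply {k : ℕ} (l : ℕ) (i j : Fin k) :
    (Jmat k 0 ^ l) i j = if (j : ℕ) = i + l then 1 else 0 := by
  induction l generalizing i with
  | zero => simp [Matrix.one_apply, Fin.ext_iff, eq_comm]
  | succ l ih =>
    obtain _ | k := k
    · exact i.elim0
    rw [pow_succ']
    cases i using Fin.lastCases with
    | last =>
      rw [Jmat_zero_mul_last, if_neg (by have := j.2; simp only [Fin.val_last]; lia)]
      rfl
    | cast i =>
      rw [Jmat_zero_mul_castSucc, ih]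
      simp [add_assoc, add_comm 1]

theorem isNilpotent_Jmat_zero (k : ℕ) : IsNilpotent (Jmat k 0) :=
  ⟨k, Matrix.ext fun i j => (Jmat_zero_pow_apply k i j).trans (if_neg (by lia))⟩

theorem finrank_ker_vecMul_Jmat_zero_pow (k l : ℕ) :
    Module.finrank ℂ (LinearMap.ker (Jmat k 0 ^ l).vecMulLinear) = min k l := by
  let f : (Fin k → ℂ) →ₗ[ℂ] (Fin (k - l) → ℂ) := LinearMap.funLeft ℂ ℂ (Fin.castLE (k.sub_le l))
  have hf : LinearMap.ker (Jmat k 0 ^ l).vecMulLinear = LinearMap.ker f := by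
    ext v
    have hv (d : Fin k) :
        (v ᵥ* Jmat k 0 ^ l) d = ∑ c : Fin k, if (d : ℕ) = c + l then v c else 0 := by
      simp [Matrix.vecMul, dotProduct, Jmat_zero_pow_apply]
    simp only [LinearMap.mem_ker, Matrix.vecMulLinear_apply, funext_iff, hv, Pi.zero_apply]
    refine ⟨fun h c => ?_, fun h d => Finset.sum_eq_zero fun c _ => ?_⟩
    · have := h ⟨c + l, by lia⟩
      rwa [Finset.sum_eq_single (Fin.castLE (k.sub_le l) c)
        (fun b _ hb => if_neg fun h => hb (Fin.ext (by simp at h ⊢; lia))) (by simp),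
        if_pos (by simp)] at this
    · exact ite_eq_right_iff.2 fun hd => h ⟨c, by lia⟩
  have hrank := f.finrank_range_add_finrank_ker
  rw [LinearMap.range_eq_top.2 (LinearMap.funLeft_surjective_of_injective ℂ ℂ _
    (Fin.castLE_injective _)), finrank_top, Module.finrank_fin_fun, Module.finrank_fin_fun] at hrank
  rw [hf]
  lia

theorem ofFn_single {i : ℕ} (j : Fin i) : ofFn i (Pi.single j (1 : ℂ)) = X ^ (j : ℕ) := by
  rw [ofFn_eq_sum_monomial, Finset.sum_eq_single j (fun b _ hb => by simp [hb]) (by simp),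
    Pi.single_eq_same, X_pow_eq_monomial]

theorem ofFn_vecMul_Gmat {i : ℕ} (v : Fin i → ℂ) : ofFn _ (v ᵥ* Gmat i) = ofFn i v := by
  rw [Matrix.vecMul_eq_sum, map_sum, ofFn_eq_sum_monomial v]
  refine Finset.sum_congr rfl fun j _ => ?_
  rw [map_smul, Gmat_row, ofFn_single, smul_X_eq_monomial, Fin.val_castSucc]

theorem ofFn_vecMul_Fmat {i : ℕ} (v : Fin i → ℂ) : ofFn _ (v ᵥ* Fmat i) = X * ofFn i v := by
  rw [Matrix.vecMul_eq_sum, map_sum, ofFn_eq_sum_monomial v, Finset.mul_sum]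
  refine Finset.sum_congr rfl fun j _ => ?_
  rw [map_smul, Fmat_row, ofFn_single, smul_X_eq_monomial, Fin.val_succ, X_mul_monomial]

theorem linearIndependent_row_Gmat (i : ℕ) : LinearIndependent ℂ (Gmat i).row := by
  refine Matrix.vecMul_injective_iff.1 fun v w (h : v ᵥ* Gmat i = w ᵥ* Gmat i) => ?_
  have := congrArg (ofFn _) h
  rw [ofFn_vecMul_Gmat, ofFn_vecMul_Gmat] at this
  exact injective_ofFn i this

theorem linearIndependent_row_Fmat_sub (i : ℕ) (ν : ℂ) :
    LinearIndependent ℂ (Fmat i - ν • Gmat i).row := by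
  refine Matrix.vecMul_injective_iff.1 fun v w h => injective_ofFn i ?_
  have key (v : Fin i → ℂ) :
      ofFn _ (v ᵥ* (Fmat i - ν • Gmat i)) = (X - C ν) * ofFn i v := by
    rw [Matrix.vecMul_sub, Matrix.vecMul_smul, map_sub, map_smul, ofFn_vecMul_Fmat,
      ofFn_vecMul_Gmat, sub_mul, smul_eq_C_mul]
  exact mul_left_cancel₀ (X_sub_C_ne_zero ν) (by rw [← key, ← key]; exact congrArg _ h)

theorem eq_zero_of_mul_eq_nilpotent_mul {K n k k' : Type*} [Field K] [Fintype n] [DecidableEq n]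
    [Fintype k] {N : Matrix n n K} (hN : IsNilpotent N) {r s : Matrix k k' K}
    (hr : LinearIndependent K r.row) {X : Matrix n k K} (h : X * r = N * X * s) : X = 0 := by
  obtain ⟨b, hb⟩ := hN
  have hcancel {Y : Matrix n k K} (hY : Y * r = 0) : Y = 0 :=
    funext fun j => Matrix.vecMul_injective_iff.2 hr <|
      (congrFun hY j).trans (Matrix.zero_vecMul r).symm
  have hstep (a : ℕ) (ha : N ^ (a + 1) * X = 0) : N ^ a * X = 0 :=
    hcancel <| by
      rw [Matrix.mul_assoc, h, Matrix.mul_assoc, ← Matrix.mul_assoc, ← pow_succ,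
        ← Matrix.mul_assoc, ha, Matrix.zero_mul]
  have hpow : N ^ b * X = 0 := by rw [hb, Matrix.zero_mul]
  clear hb
  induction b with
  | zero => simpa using hpow
  | succ b ih => exact ih (hstep b hpow)

section Vanishing

variable {k k' : Type*} [Fintype k] {s t : Matrix k k' ℂ}

theorem nullity_Eblk_eq_zero {ν : ℂ} (h : LinearIndependent ℂ (t - ν • s).row) (l : ℕ) :
    nullity (Eblk l ν) s t = 0 := by
  refine nullity_eq_zero_iff.2 fun X (hX : Jmat l ν * X * s = 1 * X * t) =>
    eq_zero_of_mul_eq_nilpotent_mul (isNilpotent_Jmat_zero l) h (s := s) ?_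
  rw [Jmat_eq_add] at hX
  simp only [Matrix.add_mul, Matrix.smul_mul, Matrix.one_mul] at hX
  rw [Matrix.mul_sub, Matrix.mul_smul, ← hX, add_sub_cancel_left]

theorem nullity_EInfblk_eq_zero (h : LinearIndependent ℂ s.row) (l : ℕ) :
    nullity (EInfblk l) s t = 0 :=
  nullity_eq_zero_iff.2 fun X (hX : 1 * X * s = Jmat l 0 * X * t) =>
    eq_zero_of_mul_eq_nilpotent_mul (isNilpotent_Jmat_zero l) h (by rwa [Matrix.one_mul] at hX)

theorem nullity_LTblk_eq_zero (h : LinearIndependent ℂ s.row) (l : ℕ) :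
    nullity (LTblk l) s t = 0 := by
  have hF : Fmat l * (Fmat l)ᵀ = 1 := by
    ext i j
    simp [Fmat_mul, Fmat_row, Pi.single_apply, Matrix.one_apply]
  have hG : Fmat l * (Gmat l)ᵀ = Jmat l 0 := by
    ext i j
    have (h : (i : ℕ) = j) : ¬ (j : ℕ) = i + 1 := by lia
    simpa [Fmat_mul, Gmat, Jmat, eq_comm] using this
  refine nullity_eq_zero_iff.2 fun X (hX : (Fmat l)ᵀ * X * s = (Gmat l)ᵀ * X * t) =>
    eq_zero_of_mul_eq_nilpotent_mul (isNilpotent_Jmat_zero l) h (s := t) ?_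
  have := congrArg (Fmat l * ·) hX
  simpa only [← Matrix.mul_assoc, hF, hG, Matrix.one_mul] using this

end Vanishing

theorem Fmat_submatrix_rev (l : ℕ) : (Fmat l).submatrix Fin.revPerm Fin.revPerm = Gmat l := by
  ext i j
  simp only [Fmat, Gmat, Matrix.submatrix_apply, Matrix.of_apply, Fin.revPerm_apply, Fin.val_rev]
  exact if_congr (by lia) rfl rfl

theorem Gmat_submatrix_rev (l : ℕ) : (Gmat l).submatrix Fin.revPerm Fin.revPerm = Fmat l := by
  rw [← Fmat_submatrix_rev, Matrix.submatrix_submatrix]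
  exact congrArg₂ _ (funext Fin.rev_rev) (funext Fin.rev_rev)

theorem Jmat_submatrix_rev (l : ℕ) (μ : ℂ) :
    (Jmat l μ).submatrix Fin.revPerm Fin.revPerm = (Jmat l μ)ᵀ := by
  ext i j
  simp only [Jmat, Matrix.submatrix_apply, Matrix.transpose_apply, Matrix.of_apply,
    Fin.revPerm_apply, Fin.val_rev]
  exact if_congr (by lia) rfl (if_congr (by lia) rfl rfl)

theorem nullity_Lblk_swap {k k' : Type*} [Fintype k] (s t : Matrix k k' ℂ) (l : ℕ) :
    nullity (Lblk l) s t = nullity (Lblk l) t s := by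
  rw [Lblk, nullity_swap, ← nullity_submatrix _ _ _ Fin.revPerm Fin.revPerm,
    Fmat_submatrix_rev, Gmat_submatrix_rev]

theorem nullity_LTblk_swap {k k' : Type*} [Fintype k] (s t : Matrix k k' ℂ) (l : ℕ) :
    nullity (LTblk l) s t = nullity (LTblk l) t s := by
  rw [LTblk, nullity_swap, ← nullity_submatrix _ _ _ Fin.revPerm Fin.revPerm]
  simp only [← Matrix.transpose_submatrix, Fmat_submatrix_rev, Gmat_submatrix_rev]

section Krylov

variable {K k : Type*} [Field K] [Fintype k] [DecidableEq k]

/-- The matrix with the rows `v, v t, …, v t ^ p`, as a linear function of `v`. -/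
def krylov (t : Matrix k k K) (p : ℕ) : (k → K) →ₗ[K] Matrix (Fin (p + 1)) k K :=
  LinearMap.pi fun j => (t ^ (j : ℕ)).vecMulLinear

theorem krylov_apply (t : Matrix k k K) (p : ℕ) (v : k → K) (j : Fin (p + 1)) :
    krylov t p v j = v ᵥ* t ^ (j : ℕ) := rfl

theorem krylov_injective (t : Matrix k k K) (p : ℕ) : Function.Injective (krylov t p) := by
  intro v w h
  have := congrFun h 0
  simpa [krylov_apply] using this

theorem krylov_succ (t : Matrix k k K) (p : ℕ) (v : k → K) (j : Fin p) :
    krylov t p v j.succ = krylov t p v j.castSucc ᵥ* t := by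
  rw [krylov_apply, krylov_apply, Matrix.vecMul_vecMul, Fin.val_succ, pow_succ, Fin.val_castSucc]

theorem eq_krylov {t : Matrix k k K} {p : ℕ} {X : Matrix (Fin (p + 1)) k K}
    (h : ∀ j : Fin p, X j.succ = X j.castSucc ᵥ* t) : X = krylov t p (X 0) := by
  funext j
  induction j using Fin.induction with
  | zero => simp [krylov_apply]
  | succ j ih => rw [h, ih, krylov_succ]

end Krylov

theorem nullity_Lblk_one_left {k : ℕ} (t : Matrix (Fin k) (Fin k) ℂ) (l : ℕ) :
    nullity (Lblk l) 1 t = k := by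
  have : intertwiners (Lblk l) 1 t = LinearMap.range (krylov t l) := by
    ext X
    rw [mem_intertwiners, Matrix.mul_one, Lblk, Fmat_mul, Gmat_mul, LinearMap.mem_range]
    constructor
    · exact fun h => ⟨X 0, (eq_krylov (congrFun h)).symm⟩
    · rintro ⟨v, rfl⟩
      exact funext (krylov_succ t l v)
  rw [nullity, this, LinearMap.finrank_range_of_inj (krylov_injective t l),
    Module.finrank_fin_fun]

theorem nullity_Eblk_zero_one {k : ℕ} (t : Matrix (Fin k) (Fin k) ℂ) (l : ℕ) :
    nullity (Eblk l 0) 1 t = Module.finrank ℂ (LinearMap.ker (t ^ l).vecMulLinear) := by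
  obtain _ | l := l
  · have : LinearMap.ker (t ^ 0).vecMulLinear = ⊥ := by
      ext v
      simp
    rw [this, finrank_bot, nullity_eq_zero_iff]
    exact fun X _ => Subsingleton.elim X 0
  have : intertwiners (Eblk (l + 1) 0) 1 t =
      (LinearMap.ker (t ^ (l + 1)).vecMulLinear).map (krylov t l) := by
    ext X
    have hlast (v : Fin k → ℂ) : (krylov t l v * t) (Fin.last l) = v ᵥ* t ^ (l + 1) := by
      rw [Matrix.mul_apply_eq_vecMul, krylov_apply, Matrix.vecMul_vecMul, Fin.val_last, pow_succ]
    rw [mem_intertwiners, Matrix.mul_one, Eblk, Matrix.one_mul, Submodule.mem_map]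
    constructor
    · intro h
      have hX := eq_krylov fun j => (Jmat_zero_mul_castSucc X j).symm.trans (congrFun h _)
      refine ⟨X 0, ?_, hX.symm⟩
      rw [LinearMap.mem_ker, Matrix.vecMulLinear_apply, ← hlast, ← hX, ← h, Jmat_zero_mul_last]
    · rintro ⟨v, hv, rfl⟩
      funext j
      cases j using Fin.lastCases with
      | last => rw [Jmat_zero_mul_last, hlast]; exact hv.symm
      | cast j => rw [Jmat_zero_mul_castSucc]; exact krylov_succ t l v j
  rw [nullity, this]
  exact (Submodule.equivMapOfInjective _ (krylov_injective t l) _).finrank_eq.symm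

theorem degree_X_pow_mul_ofFn_lt {i p j : ℕ} (hj : j ≤ p) (v : Fin (i - p) → ℂ) :
    (X ^ j * ofFn _ v).degree < (i : WithBot ℕ) := by
  refine (degree_lt_iff_coeff_zero _ _).2 fun m hm => ?_
  rw [coeff_X_pow_mul']
  exact ite_eq_right_iff.2 fun _ => ofFn_coeff_eq_zero_of_ge v (by lia)

theorem ofFn_toFn_of_degree_lt {R : Type*} [Semiring R] [DecidableEq R] {n : ℕ} {f : R[X]}
    (hf : f.degree < n) : ofFn n (toFn n f) = f := by
  obtain rfl | hf0 := eq_or_ne f 0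
  · simp
  · exact ofFn_comp_toFn_eq_id_of_natDegree_lt ((natDegree_lt_iff_degree_lt hf0).2 hf)

/-- The matrix whose row `j` consists of the coefficients of `X ^ j` times the polynomial with
coefficients `v`, as a linear function of `v`. -/
def toeplitz (i p : ℕ) : (Fin (i - p) → ℂ) →ₗ[ℂ] Matrix (Fin (p + 1)) (Fin i) ℂ :=
  LinearMap.pi fun j => toFn i ∘ₗ LinearMap.mulLeft ℂ (X ^ (j : ℕ)) ∘ₗ ofFn (i - p)

theorem ofFn_toeplitz {i p : ℕ} (v : Fin (i - p) → ℂ) (j : Fin (p + 1)) :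
    ofFn i (toeplitz i p v j) = X ^ (j : ℕ) * ofFn _ v :=
  ofFn_toFn_of_degree_lt (degree_X_pow_mul_ofFn_lt j.is_le v)

theorem toeplitz_injective (i p : ℕ) : Function.Injective (toeplitz i p) := fun v w h => by
  have := congrArg (ofFn i) (congrFun h 0)
  rw [ofFn_toeplitz, ofFn_toeplitz, Fin.val_zero, pow_zero, one_mul, one_mul] at this
  exact injective_ofFn _ this

theorem mem_range_toeplitz {i p : ℕ} {Y : Matrix (Fin (p + 1)) (Fin i) ℂ} :
    Y ∈ LinearMap.range (toeplitz i p) ↔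
      ∀ j : Fin p, ofFn i (Y j.succ) = X * ofFn i (Y j.castSucc) := by
  constructor
  · rintro ⟨v, rfl⟩ j
    rw [ofFn_toeplitz, ofFn_toeplitz, ← mul_assoc, ← pow_succ', Fin.val_succ, Fin.val_castSucc]
  · intro h
    have hpow (j : Fin (p + 1)) : ofFn i (Y j) = X ^ (j : ℕ) * ofFn i (Y 0) := by
      induction j using Fin.induction with
      | zero => simp
      | succ j ih => rw [h, ih, Fin.val_castSucc, Fin.val_succ, pow_succ', mul_assoc]
    have hdeg : (ofFn i (Y 0)).degree < (i - p : ℕ) := by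
      refine (degree_lt_iff_coeff_zero _ _).2 fun m hm => ?_
      rw [← coeff_X_pow_mul _ p]
      exact (congrArg (coeff · (m + p)) (hpow (Fin.last p))).symm.trans
        (ofFn_coeff_eq_zero_of_ge _ (by lia))
    refine ⟨toFn _ (ofFn i (Y 0)), funext fun j => injective_ofFn i ?_⟩
    rw [ofFn_toeplitz, ofFn_toFn_of_degree_lt hdeg, hpow j]

theorem nullity_Lblk_Gmat_Fmat (i p : ℕ) : nullity (Lblk p) (Gmat i) (Fmat i) = i - p := by
  have : intertwiners (Lblk p) (Gmat i) (Fmat i) = LinearMap.range (toeplitz i p) := by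
    ext Y
    rw [mem_intertwiners, Lblk, Fmat_mul, Gmat_mul, mem_range_toeplitz]
    refine funext_iff.trans (forall_congr' fun j => ?_)
    rw [← ofFn_vecMul_Gmat, ← ofFn_vecMul_Fmat]
    exact (injective_ofFn (i + 1)).eq_iff.symm
  rw [nullity, this, LinearMap.finrank_range_of_inj (toeplitz_injective i p),
    Module.finrank_fin_fun]

theorem nullity_toPencil_Gmat_Fmat (b : KBlock) (i : ℕ) :
    nullity b.toPencil (Gmat i) (Fmat i) = if b.kind = .inl true then i - b.idx else 0 :=
  match b with
  | .L p => nullity_Lblk_Gmat_Fmat i p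
  | .LT p => nullity_LTblk_eq_zero (linearIndependent_row_Gmat i) p
  | .E l ν => nullity_Eblk_eq_zero (linearIndependent_row_Fmat_sub i ν) l
  | .Einf l => nullity_EInfblk_eq_zero (linearIndependent_row_Gmat i) l

theorem nullity_tr_Eblk {k k' : Type*} [Fintype k] (l : ℕ) (ν : ℂ) (s t : Matrix k k' ℂ) :
    nullity (Eblk l ν).tr s t = nullity (Eblk l ν) s t := by
  rw [← nullity_submatrix (Eblk l ν) s t Fin.revPerm Fin.revPerm, Eblk, Jmat_submatrix_rev,
    Matrix.submatrix_one_equiv, Pencil.tr, Matrix.transpose_one]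

theorem nullity_tr_EInfblk {k k' : Type*} [Fintype k] (l : ℕ) (s t : Matrix k k' ℂ) :
    nullity (EInfblk l).tr s t = nullity (EInfblk l) s t := by
  rw [← nullity_submatrix (EInfblk l) s t Fin.revPerm Fin.revPerm, EInfblk, Jmat_submatrix_rev,
    Matrix.submatrix_one_equiv, Pencil.tr, Matrix.transpose_one]

theorem nullity_tr_toPencil_Gmat_Fmat (b : KBlock) (i : ℕ) :
    nullity b.toPencil.tr (Gmat i) (Fmat i) = if b.kind = .inl false then i - b.idx else 0 :=
  match b with
  | .L p => nullity_LTblk_eq_zero (linearIndependent_row_Gmat i) p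
  | .LT p => nullity_Lblk_Gmat_Fmat i p
  | .E l ν => (nullity_tr_Eblk l ν _ _).trans (nullity_toPencil_Gmat_Fmat (.E l ν) i)
  | .Einf l => (nullity_tr_EInfblk l _ _).trans (nullity_toPencil_Gmat_Fmat (.Einf l) i)

theorem nullity_Eblk_one_Jmat (ν μ : ℂ) (k l : ℕ) :
    nullity (Eblk l ν) 1 (Jmat k μ) = if ν = μ then min k l else 0 := by
  split_ifs with h
  · subst h
    have : intertwiners (Eblk l ν) 1 (Jmat k ν) = intertwiners (Eblk l 0) 1 (Jmat k 0) := by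
      ext X
      rw [mem_intertwiners, mem_intertwiners, Eblk, Eblk, Jmat_eq_add l ν, Jmat_eq_add k ν]
      simp [Matrix.add_mul, Matrix.mul_add]
    rw [nullity, this, ← finrank_ker_vecMul_Jmat_zero_pow, ← nullity_Eblk_zero_one, nullity]
  · refine nullity_Eblk_eq_zero (Matrix.linearIndependent_rows_iff_isUnit.2 ?_) l
    rw [Jmat_eq_add, add_sub_right_comm, ← sub_smul, ← one_smul ℂ (Jmat k 0)]
    exact isUnit_smul_one_add_smul_Jmat (sub_ne_zero.2 (Ne.symm h)) 1 k

/-- The regular pencil `s - λ t` of size `k` paired with `E_k(μ)` by `nullity`: it satisfies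
`A s = B t` for `A - λ B = E_k(μ)`. -/
def testPair (k : ℕ) : Option ℂ → Pencil k k
  | some μ => (1, Jmat k μ)
  | none => (Jmat k 0, 1)

theorem nullity_toPencil_testPair (b : KBlock) (μ : Option ℂ) (k : ℕ) :
    nullity b.toPencil (testPair k μ).1 (testPair k μ).2 =
      (if b.kind = .inr μ then min k b.idx else 0) + if b.kind = .inl true then k else 0 := by
  have hone : LinearIndependent ℂ (1 : Matrix (Fin k) (Fin k) ℂ).row :=
    Matrix.linearIndependent_rows_iff_isUnit.2 isUnit_one
  rcases μ with _ | μ <;> rcases b with ⟨l, ν⟩ | l | l | l <;>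
    simp only [KBlock.kind, KBlock.idx, reduceCtorEq, if_true, if_false, add_zero, zero_add,
      Sum.inr.injEq, Option.some.injEq]
  · refine nullity_Eblk_eq_zero (Matrix.linearIndependent_rows_iff_isUnit.2 ?_) l
    simpa [testPair, sub_eq_add_neg] using isUnit_smul_one_add_smul_Jmat one_ne_zero (-ν) k
  · exact (nullity_swap _ _ _ _).trans ((nullity_Eblk_one_Jmat 0 0 k l).trans (if_pos rfl))
  · exact (nullity_Lblk_swap _ _ l).trans (nullity_Lblk_one_left _ l)
  · exact (nullity_LTblk_swap _ _ l).trans (nullity_LTblk_eq_zero hone l)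
  · exact nullity_Eblk_one_Jmat ν μ k l
  · exact nullity_EInfblk_eq_zero hone l
  · exact nullity_Lblk_one_left _ l
  · exact nullity_LTblk_eq_zero hone l

end BlockNullities

theorem sum_map_ite_kind_eq {M : Type*} [AddCommMonoid M] (κ : BlockKind) (g : ℕ → M)
    (s : Multiset KBlock) :
    (s.map fun b => if b.kind = κ then g b.idx else 0).sum = ((sizes κ s).map g).sum := by
  induction s using Multiset.induction_on with
  | empty => rfl
  | cons b s ih =>
    rw [Multiset.map_cons, Multiset.sum_cons, ih]
    split_ifs with h
    · rw [← block_kind_idx b, h, sizes_cons_self, Multiset.map_cons, Multiset.sum_cons, idx_block]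
    · rw [← block_kind_idx b, sizes_cons_of_ne h, zero_add]

theorem sum_map_ite_kind_const (κ : BlockKind) (k : ℕ) (s : Multiset KBlock) :
    (s.map fun b => if b.kind = κ then k else 0).sum = k * (sizes κ s).card := by
  rw [sum_map_ite_kind_eq κ fun _ => k, Multiset.map_const', Multiset.sum_replicate, smul_eq_mul,
    mul_comm]

namespace WeakRepresentsE

variable {m n : ℕ} {P : Pencil m n} {s : Multiset KBlock}

theorem nullity_testPair (h : WeakRepresentsE P s) (μ : Option ℂ) (k : ℕ) :
    nullity P (testPair k μ).1 (testPair k μ).2 =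
      minSum (sizes (.inr μ) s) k + k * (sizes (.inl true) s).card := by
  simp_rw [h.nullity_eq, nullity_toPencil_testPair]
  rw [Multiset.sum_map_add, sum_map_ite_kind_eq _ (min k), sum_map_ite_kind_const, minSum]

theorem nullity_Gmat_Fmat (h : WeakRepresentsE P s) (i : ℕ) :
    nullity P (Gmat i) (Fmat i) = capSum (sizes (.inl true) s) i := by
  simp_rw [h.nullity_eq, nullity_toPencil_Gmat_Fmat]
  exact sum_map_ite_kind_eq _ (i - ·) s

theorem nullity_tr_Gmat_Fmat (h : WeakRepresentsE P s) (i : ℕ) :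
    nullity P.tr (Gmat i) (Fmat i) = capSum (sizes (.inl false) s) i := by
  simp_rw [h.nullity_tr_eq, nullity_tr_toPencil_Gmat_Fmat]
  exact sum_map_ite_kind_eq _ (i - ·) s

theorem cols_eq_sum_idx_add (h : WeakRepresentsE P s) :
    n = (s.map KBlock.idx).sum + (sizes (.inl true) s).card := by
  have hb (b : KBlock) : b.cols = b.idx + if b.kind = .inl true then 1 else 0 := by
    cases b <;> simp [KBlock.cols, KBlock.idx, KBlock.kind]
  rw [h.cols_eq, Multiset.map_congr rfl fun b _ => hb b, Multiset.sum_map_add,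
    sum_map_ite_kind_const, one_mul]

theorem rows_eq_sum_idx_add (h : WeakRepresentsE P s) :
    m = (s.map KBlock.idx).sum + (sizes (.inl false) s).card := by
  have hb (b : KBlock) : b.rows = b.idx + if b.kind = .inl false then 1 else 0 := by
    cases b <;> simp [KBlock.rows, KBlock.idx, KBlock.kind]
  rw [h.rows_eq, Multiset.map_congr rfl fun b _ => hb b, Multiset.sum_map_add,
    sum_map_ite_kind_const, one_mul]

end WeakRepresentsE

theorem dominates_of_mem_closure {m n : ℕ} {P P' : Pencil m n} {s t : Multiset KBlock}
    (hs : WeakRepresentsE P s) (ht : WeakRepresentsE P' t) (h : P' ∈ closure (Pencil.orbE P)) :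
    Dominates s t where
  capSum_le
    | true, i => by
      simpa only [hs.nullity_Gmat_Fmat, ht.nullity_Gmat_Fmat] using
        Pencil.nullity_le_of_mem_closure h (Gmat i) (Fmat i)
    | false, i => by
      simpa only [hs.nullity_tr_Gmat_Fmat, ht.nullity_tr_Gmat_Fmat] using
        Pencil.nullity_le_of_mem_closure (Pencil.tr_mem_closure h) (Gmat i) (Fmat i)
  minSum_le μ k := by
    simpa only [hs.nullity_testPair, ht.nullity_testPair] using
      Pencil.nullity_le_of_mem_closure h (testPair k μ).1 (testPair k μ).2
  size_eq
    | true => hs.cols_eq_sum_idx_add.symm.trans ht.cols_eq_sum_idx_add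
    | false => hs.rows_eq_sum_idx_add.symm.trans ht.rows_eq_sum_idx_add

/-! ### Singular and Jordan chains -/

section Chains

open Module (Dual finrank)

variable {K V W : Type*} [Field K] [AddCommGroup V] [Module K V] [AddCommGroup W] [Module K W]

/-- Multiplication of power series by `A - λ B`: the map sending the sequence `v` of coefficients
to `A v₀, A v₁ - B v₀, A v₂ - B v₁, …`. -/
def shiftMap (A B : V →ₗ[K] W) : (ℕ → V) →ₗ[K] ℕ → W where
  toFun v
    | 0 => A (v 0)
    | i + 1 => A (v (i + 1)) - B (v i)
  map_add' v w := by
    ext (_ | i)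
    · exact map_add A _ _
    · simp only [Pi.add_apply, map_add]
      abel
  map_smul' c v := by
    ext (_ | i)
    · exact map_smul A _ _
    · simp [smul_sub]

theorem shiftMap_zero (A B : V →ₗ[K] W) (v : ℕ → V) : shiftMap A B v 0 = A (v 0) := rfl

theorem shiftMap_succ (A B : V →ₗ[K] W) (v : ℕ → V) (i : ℕ) :
    shiftMap A B v (i + 1) = A (v (i + 1)) - B (v i) := rfl

theorem shiftMap_single (A B : V →ₗ[K] W) (i : ℕ) (v : V) :
    shiftMap A B (Pi.single i v) = Pi.single i (A v) - Pi.single (i + 1) (B v) := by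
  ext (_ | j)
  · simp [shiftMap_zero, Pi.single_apply, apply_ite A]
  · simp [shiftMap_succ, Pi.single_apply, apply_ite A, apply_ite B]

/-- A singular chain of length `p`: the coefficients of a polynomial of degree at most `p` that is
annihilated by `A - λ B` and whose constant term is nonzero. -/
def IsLChain (A B : V →ₗ[K] W) (p : ℕ) (x : ℕ → V) : Prop :=
  x 0 ≠ 0 ∧ A (x 0) = 0 ∧ (∀ t, A (x (t + 1)) = B (x t)) ∧ ∀ t, p < t → x t = 0

theorem exists_isLChain_of_finrank_lt [FiniteDimensional K V] [FiniteDimensional K W]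
    (A B : V →ₗ[K] W) (h : finrank K W < finrank K V) : ∃ p x, IsLChain A B p x := by
  classical
  set w := finrank K W with hw
  let E : (Fin (w + 1) → V) →ₗ[K] ℕ → V :=
    LinearMap.pi fun t => if ht : t < w + 1 then LinearMap.proj ⟨t, ht⟩ else 0
  have E_apply (f : Fin (w + 1) → V) (t : ℕ) :
      E f t = if ht : t < w + 1 then f ⟨t, ht⟩ else 0 := by
    change (if ht : t < w + 1 then LinearMap.proj ⟨t, ht⟩ else (0 : _ →ₗ[K] V)) f = _
    split_ifs <;> rfl
  have E_of_le (f : Fin (w + 1) → V) {t : ℕ} (ht : w + 1 ≤ t) : E f t = 0 := by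
    rw [E_apply, dif_neg ht.not_gt]
  have hker : LinearMap.ker (LinearMap.funLeft K W (Fin.val (n := w + 2)) ∘ₗ
      shiftMap A B ∘ₗ E) ≠ ⊥ := by
    apply LinearMap.ker_ne_bot_of_finrank_lt
    rw [Module.finrank_pi_fintype, Module.finrank_pi_fintype]
    simp only [Finset.sum_const, Finset.card_univ, Fintype.card_fin, smul_eq_mul, ← hw]
    nlinarith
  obtain ⟨f, hf, hf0⟩ := Submodule.exists_mem_ne_zero_of_ne_bot hker
  have hshift (t : ℕ) (ht : t < w + 2) : shiftMap A B (E f) t = 0 := congrFun hf ⟨t, ht⟩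
  have hrec (t : ℕ) : A (E f (t + 1)) = B (E f t) := by
    by_cases ht : t + 1 < w + 2
    · exact sub_eq_zero.1 (hshift (t + 1) ht)
    · rw [E_of_le f (by lia), E_of_le f (by lia), map_zero, map_zero]
  have hex : ∃ t, E f t ≠ 0 := by
    obtain ⟨t, ht⟩ := Function.ne_iff.1 hf0
    exact ⟨t, by rwa [E_apply, dif_pos t.2]⟩
  refine ⟨w, fun t => E f (Nat.find hex + t), Nat.find_spec hex, ?_, fun t => hrec _,
    fun t ht => E_of_le f (by lia)⟩
  rcases hi : Nat.find hex with _ | i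
  · exact hshift 0 (by lia)
  · change A (E f (i + 1)) = 0
    rw [hrec, not_not.1 (Nat.find_min hex (m := i) (by lia)), map_zero]

/-- No subspace is mapped by `A` and `B` into a subspace of smaller dimension. -/
def NoLChain (A B : V →ₗ[K] W) : Prop :=
  ∀ U : Submodule K V, finrank K U ≤ finrank K (U.map A ⊔ U.map B : Submodule K W)

theorem exists_isLChain_of_not_noLChain [FiniteDimensional K V] [FiniteDimensional K W]
    {A B : V →ₗ[K] W} (h : ¬ NoLChain A B) : ∃ p x, IsLChain A B p x := by
  simp only [NoLChain, not_forall, not_le] at h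
  obtain ⟨U, hU⟩ := h
  obtain ⟨p, x, h0, h1, h2, h3⟩ := exists_isLChain_of_finrank_lt
    (A.restrict (p := U) (q := U.map A ⊔ U.map B)
      fun u hu => Submodule.mem_sup_left (Submodule.mem_map_of_mem hu))
    (B.restrict (p := U) (q := U.map A ⊔ U.map B)
      fun u hu => Submodule.mem_sup_right (Submodule.mem_map_of_mem hu)) hU
  exact ⟨p, fun t => x t, by simpa using h0, congrArg Subtype.val h1,
    fun t => congrArg Subtype.val (h2 t), fun t ht => by simp [h3 t ht]⟩

theorem NoLChain.swap {A B : V →ₗ[K] W} (h : NoLChain A B) : NoLChain B A := fun U => by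
  rw [sup_comm]
  exact h U

theorem NoLChain.sub_smul [FiniteDimensional K W] {A B : V →ₗ[K] W} (h : NoLChain A B) (μ : K) :
    NoLChain (A - μ • B) B := fun U => by
  refine (h U).trans (Submodule.finrank_mono (sup_le ?_ le_sup_right))
  rintro _ ⟨u, hu, rfl⟩
  have h1 : A u = (A - μ • B) u + B (μ • u) := by simp
  rw [h1]
  exact Submodule.add_mem_sup (Submodule.mem_map_of_mem hu)
    (Submodule.mem_map_of_mem (U.smul_mem μ hu))

theorem NoLChain.finrank_le [FiniteDimensional K W] {A B : V →ₗ[K] W}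
    (h : NoLChain A B) : finrank K V ≤ finrank K W := by
  have := (h ⊤).trans (Submodule.finrank_le _)
  rwa [finrank_top] at this

theorem exists_dual_sequence (A B : V →ₗ[K] W) {p q : ℕ} (w : W)
    (h : ¬ ∃ v : ℕ → V, (∀ i, q ≤ i → v i = 0) ∧ A (v 0) = w ∧
      ∀ i, i < p → A (v (i + 1)) = B (v i)) :
    ∃ η : ℕ → Dual K W, (∀ i, p < i → η i = 0) ∧ η 0 w ≠ 0 ∧
      ∀ i, i < q → ∀ v, η i (A v) = η (i + 1) (B v) := by
  classical
  let D : Submodule K (ℕ → V) := Submodule.pi (Set.Ici q) fun _ => ⊥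
  let N : Submodule K (ℕ → W) := Submodule.pi (Set.Iic p) fun _ => ⊥
  have hnot : Pi.single 0 w ∉ D.map (shiftMap A B) ⊔ N := by
    rw [Submodule.mem_sup]
    rintro ⟨_, ⟨v, hv, rfl⟩, u, hu, huw⟩
    have hshift (i : ℕ) (hi : i ≤ p) : shiftMap A B v i = (Pi.single 0 w : ℕ → W) i := by
      rw [← huw, Pi.add_apply, (Submodule.mem_bot K).1 (hu i hi), add_zero]
    have hzero := Pi.single_eq_same (M := fun _ : ℕ => W) 0 w
    have hsucc (i : ℕ) := Pi.single_eq_of_ne (M := fun _ => W) i.succ_ne_zero w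
    exact h ⟨v, hv, (hshift 0 p.zero_le).trans hzero, fun i hi =>
      sub_eq_zero.1 ((hshift (i + 1) hi).trans (hsucc i))⟩
  obtain ⟨Φ, hΦw, hΦ⟩ := Submodule.exists_le_ker_of_notMem hnot
  rw [sup_le_iff, Submodule.map_le_iff_le_comap] at hΦ
  refine ⟨fun i => Φ ∘ₗ LinearMap.single K (fun _ => W) i, fun i hi => LinearMap.ext fun u => ?_,
    hΦw, fun i hi v => ?_⟩
  · exact hΦ.2 fun j hj => Pi.single_eq_of_ne (M := fun _ => W) (lt_of_le_of_lt hj hi).ne u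
  · have hv : Φ (shiftMap A B (Pi.single i v)) = 0 :=
      hΦ.1 fun j hj => Pi.single_eq_of_ne (M := fun _ => V) (lt_of_lt_of_le hi hj).ne' v
    rwa [shiftMap_single, map_sub, sub_eq_zero] at hv

theorem isUnit_of_toeplitz {R : Type*} [CommRing R] {n : ℕ} {a : ℕ → ℕ → R} (h0 : IsUnit (a 0 0))
    (h1 : ∀ i, i + 1 < n → a (i + 1) 0 = 0)
    (h2 : ∀ i j, i + 1 < n → j + 1 < n → a (i + 1) (j + 1) = a i j) :
    IsUnit (Matrix.of fun i j : Fin n => a i j) := by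
  have hdiag (i : ℕ) (hi : i < n) : a i i = a 0 0 := by
    induction i with
    | zero => rfl
    | succ i ih => exact (h2 i i hi hi).trans (ih (by lia))
  have hlow (j i : ℕ) (hi : i < n) (hij : j < i) : a i j = 0 := by
    obtain ⟨i, rfl⟩ := Nat.exists_eq_succ_of_ne_zero (Nat.ne_zero_of_lt hij)
    induction j generalizing i with
    | zero => exact h1 i hi
    | succ j ih =>
      obtain ⟨i, rfl⟩ := Nat.exists_eq_succ_of_ne_zero (n := i) (by lia)
      exact (h2 _ j hi (by lia)).trans (ih i (by lia) (by lia))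
  have htri : (Matrix.of fun i j : Fin n => a i j).IsUpperTriangular :=
    fun i j hij => hlow j i i.2 hij
  rw [Matrix.isUnit_iff_isUnit_det, Matrix.det_of_isUpperTriangular htri, IsUnit.prod_univ_iff]
  exact fun i => by rwa [Matrix.of_apply, hdiag i i.2]

theorem finrank_map_lt [FiniteDimensional K V] (C : V →ₗ[K] W) {U : Submodule K V} {x : V}
    (hx : x ∈ U) (h0 : x ≠ 0) (hC : C x = 0) : finrank K (U.map C) < finrank K U := by
  have hrank := (C.domRestrict U).finrank_range_add_finrank_ker
  rw [LinearMap.range_domRestrict] at hrank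
  have hker : 0 < finrank K (LinearMap.ker (C.domRestrict U)) := by
    rw [Module.finrank_pos_iff_exists_ne_zero]
    exact ⟨⟨⟨x, hx⟩, hC⟩, fun h => h0 (congrArg Subtype.val (congrArg Subtype.val h))⟩
  lia

/-- A Jordan chain of length `k` of the pencil `C - λ B` for the eigenvalue zero. -/
def IsEChain (C B : V →ₗ[K] W) (k : ℕ) (x : ℕ → V) : Prop :=
  x 0 ≠ 0 ∧ C (x 0) = 0 ∧ ∀ t, t + 1 < k → C (x (t + 1)) = B (x t)

theorem IsEChain.le_finrank [FiniteDimensional K V] [FiniteDimensional K W] {C B : V →ₗ[K] W}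
    (h : NoLChain C B) {k : ℕ} {x : ℕ → V} (hx : IsEChain C B k x) : k ≤ finrank K V := by
  obtain ⟨h0, h1, h2⟩ := hx
  let U (j : ℕ) : Submodule K V := Submodule.span K (x '' Set.Iio j)
  have hsup (j : ℕ) (hj : j + 1 ≤ k) : (U j).map C ⊔ (U j).map B ≤ (U (j + 1)).map C := by
    refine sup_le (Submodule.map_mono (Submodule.span_mono
      (Set.image_mono (Set.Iio_subset_Iio j.le_succ)))) ?_
    rw [Submodule.map_span, Submodule.span_le]
    rintro _ ⟨_, ⟨i, hi : i < j, rfl⟩, rfl⟩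
    rw [← h2 i (by lia)]
    exact Submodule.mem_map_of_mem (Submodule.subset_span ⟨i + 1, Nat.succ_lt_succ hi, rfl⟩)
  have hdim (j : ℕ) (hj : j ≤ k) : j ≤ finrank K (U j) := by
    induction j with
    | zero => exact Nat.zero_le _
    | succ j ih =>
      have hle := (ih (by lia)).trans ((h _).trans (Submodule.finrank_mono (hsup j hj)))
      exact hle.trans_lt (finrank_map_lt C (Submodule.subset_span ⟨0, j.succ_pos, rfl⟩) h0 h1)
  exact (hdim k le_rfl).trans (Submodule.finrank_le _)

theorem exists_maximal_isEChain [FiniteDimensional K V] [FiniteDimensional K W]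
    {C B : V →ₗ[K] W} (h : NoLChain C B) {v : V} (hv : v ≠ 0) (hC : C v = 0) :
    ∃ k x, IsEChain C B (k + 1) x ∧ ∀ y, ¬ IsEChain C B (k + 2) y := by
  by_contra! hcon
  have key (k : ℕ) : ∃ x, IsEChain C B (k + 1) x := by
    induction k with
    | zero => exact ⟨fun _ => v, hv, hC, fun t ht => by lia⟩
    | succ k ih =>
      obtain ⟨x, hx⟩ := ih
      exact hcon k x hx
  obtain ⟨x, hx⟩ := key (finrank K V)
  exact (hx.le_finrank h).not_gt (Nat.lt_succ_self _)

end Chains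

/-! ### Direct summands of pencils of linear maps -/

section Splits

open Module (Dual finrank)

variable {V W : Type*} [AddCommGroup V] [Module ℂ V] [AddCommGroup W] [Module ℂ W]

/-- The pencil `M` of matrices is a direct summand of the pencil `A - λ B` of linear maps: there
are morphisms from `M` and to `M` whose compositions are invertible. -/
def Splits {m n : ℕ} (A B : V →ₗ[ℂ] W) (M : Pencil m n) : Prop :=
  ∃ (x : Fin n → V) (y : Fin m → W) (ξ : Fin n → Dual ℂ V) (η : Fin m → Dual ℂ W),
    ((∀ j, A (x j) = ∑ i, M.1 i j • y i) ∧ ∀ j, B (x j) = ∑ i, M.2 i j • y i) ∧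
    ((∀ i v, η i (A v) = ∑ j, M.1 i j * ξ j v) ∧ ∀ i v, η i (B v) = ∑ j, M.2 i j * ξ j v) ∧
    IsUnit (Matrix.of fun i j => ξ i (x j)) ∧ IsUnit (Matrix.of fun i j => η i (y j))

theorem Splits.swap {m n : ℕ} {A B : V →ₗ[ℂ] W} {M : Pencil m n} (h : Splits A B M) :
    Splits B A (M.2, M.1) := by
  obtain ⟨x, y, ξ, η, h1, h2, h3⟩ := h
  exact ⟨x, y, ξ, η, h1.symm, h2.symm, h3⟩

theorem apply_evalEquiv_symm_eq_sum [FiniteDimensional ℂ V] [FiniteDimensional ℂ W] {ι : Type*}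
    [Fintype ι] {A : V →ₗ[ℂ] W} {Φ : Dual ℂ (Dual ℂ V)} {Ψ : ι → Dual ℂ (Dual ℂ W)} {c : ι → ℂ}
    (h : ∀ φ, Φ (A.dualMap φ) = ∑ j, c j * Ψ j φ) :
    A ((Module.evalEquiv ℂ V).symm Φ) = ∑ j, c j • (Module.evalEquiv ℂ W).symm (Ψ j) := by
  refine (Module.evalEquiv ℂ W).injective (LinearMap.ext fun φ => ?_)
  rw [map_sum, LinearMap.sum_apply, Module.evalEquiv_apply, Module.Dual.eval_apply,
    ← LinearMap.dualMap_apply, Module.apply_evalEquiv_symm_apply, h]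
  simp

theorem Splits.of_dual [FiniteDimensional ℂ V] [FiniteDimensional ℂ W] {m n : ℕ}
    {A B : V →ₗ[ℂ] W} {M : Pencil m n} (h : Splits A.dualMap B.dualMap M) : Splits A B M.tr := by
  obtain ⟨x, y, ξ, η, ⟨hA, hB⟩, ⟨hA', hB'⟩, hx, hy⟩ := h
  refine ⟨fun i => (Module.evalEquiv ℂ V).symm (η i), fun j => (Module.evalEquiv ℂ W).symm (ξ j),
    y, x, ⟨fun i => apply_evalEquiv_symm_eq_sum (hA' i),
      fun i => apply_evalEquiv_symm_eq_sum (hB' i)⟩, ⟨fun j v => ?_, fun j v => ?_⟩, ?_, ?_⟩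
  · simpa [Pencil.tr] using LinearMap.congr_fun (hA j) v
  · simpa [Pencil.tr] using LinearMap.congr_fun (hB j) v
  · rw [← isUnit_transpose]
    convert hy using 1
    exact Matrix.ext fun i j => Module.apply_evalEquiv_symm_apply ℂ V (y j) (η i)
  · rw [← isUnit_transpose]
    convert hx using 1
    exact Matrix.ext fun i j => Module.apply_evalEquiv_symm_apply ℂ W (x j) (ξ i)

theorem Splits.of_sub_smul {k : ℕ} {A B : V →ₗ[ℂ] W} {M : Matrix (Fin k) (Fin k) ℂ} (μ : ℂ)
    (h : Splits (A - μ • B) B (M, 1)) : Splits A B (μ • 1 + M, 1) := by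
  obtain ⟨x, y, ξ, η, ⟨hA, hB⟩, ⟨hA', hB'⟩, hunit⟩ := h
  refine ⟨x, y, ξ, η, ⟨fun j => ?_, hB⟩, ⟨fun i v => ?_, hB'⟩, hunit⟩
  · rw [← sub_add_cancel (A (x j)) (μ • B (x j))]
    refine (congrArg₂ (· + ·) (hA j) (congrArg (μ • ·) (hB j))).trans ?_
    simp only [Finset.smul_sum, ← Finset.sum_add_distrib, Matrix.add_apply, Matrix.smul_apply,
      smul_eq_mul, add_smul, mul_smul, add_comm]
  · rw [← sub_add_cancel (η i (A v)) (μ * η i (B v))]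
    refine (congrArg₂ (· + ·) ?_ (congrArg (μ * ·) (hB' i v))).trans
      (b := ∑ j, M i j * ξ j v + μ * ∑ j, (1 : Matrix (Fin k) (Fin k) ℂ) i j * ξ j v) ?_
    · simpa using hA' i v
    · simp only [Finset.mul_sum, ← Finset.sum_add_distrib, Matrix.add_apply, Matrix.smul_apply,
        smul_eq_mul, add_mul, mul_assoc, add_comm]

theorem splits_Lblk {A B : V →ₗ[ℂ] W} {p : ℕ} {x : ℕ → V} {η : ℕ → Dual ℂ W} {ξ : ℕ → Dual ℂ V}
    (hx : IsLChain A B p x) (h0 : ξ 0 (x 0) ≠ 0) (hA : ∀ i < p, ∀ v, η i (A v) = ξ (i + 1) v)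
    (hB : ∀ i < p, ∀ v, η i (B v) = ξ i v) : Splits A B (Lblk p) := by
  obtain ⟨-, hx0, hx1, hx2⟩ := hx
  have hcol (i : ℕ) (hi : i < p) : ξ (i + 1) (x 0) = 0 := by rw [← hA i hi, hx0, map_zero]
  have hdiag (i j : ℕ) (hi : i < p) : ξ (i + 1) (x (j + 1)) = ξ i (x j) := by
    rw [← hA i hi, hx1, hB i hi]
  have hunit (n : ℕ) (hn : n ≤ p + 1) : IsUnit (Matrix.of fun i j : Fin n => ξ i (x j)) :=
    isUnit_of_toeplitz (a := fun i j => ξ i (x j)) h0.isUnit (fun i hi => hcol i (by lia))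
      fun i j hi _ => hdiag i j (by lia)
  refine ⟨fun j => x j, fun i => B (x i), fun j => ξ j, fun i => η i, ⟨fun j => ?_, fun j => ?_⟩,
    ⟨fun i v => ?_, fun i v => ?_⟩, hunit _ le_rfl, ?_⟩
  · cases j using Fin.cases with
    | zero => simp [Lblk, Fmat_row, hx0]
    | succ j => simp [Lblk, Fmat_row, Pi.single_apply, hx1]
  · cases j using Fin.lastCases with
    | last => simp [Lblk, Gmat_row, ← hx1, hx2]
    | cast j => simp [Lblk, Gmat_row, Pi.single_apply]
  · simp [Lblk, Fmat_row, Pi.single_apply, hA]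
  · simp [Lblk, Gmat_row, Pi.single_apply, hB]
  · convert hunit p p.le_succ using 1
    exact Matrix.ext fun i j => hB i i.2 _

theorem exists_splits_Lblk {A B : V →ₗ[ℂ] W} (h : ∃ p x, IsLChain A B p x) :
    ∃ p, Splits A B (Lblk p) := by
  classical
  obtain ⟨x, hx⟩ := Nat.find_spec h
  have hmin (q : ℕ) (hq : q < Nat.find h) (y : ℕ → V) : ¬ IsLChain A B q y := fun hy =>
    Nat.find_min h hq ⟨y, hy⟩
  rcases hp : Nat.find h with _ | p <;> rw [hp] at hx hmin
  · obtain ⟨ψ, hψ⟩ : ∃ ψ : Dual ℂ V, ψ (x 0) ≠ 0 := by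
      by_contra! hcon
      exact hx.1 ((Module.forall_dual_apply_eq_zero_iff ℂ _).1 hcon)
    exact ⟨0, splits_Lblk (η := fun _ => 0) (ξ := fun _ => ψ) hx hψ (by simp) (by simp)⟩
  have hnot : ¬ ∃ v : ℕ → V, (∀ i, p ≤ i → v i = 0) ∧ A (v 0) = B (x 0) ∧
      ∀ i, i < p → A (v (i + 1)) = B (v i) := by
    rintro ⟨v, hv, hv0, hv1⟩
    refine hmin p p.lt_succ_self (fun t => Nat.casesOn t (x 0) v) ⟨hx.1, hx.2.1, ?_, ?_⟩
    · rintro (_ | t)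
      · exact hv0
      · by_cases ht : t < p
        · exact hv1 t ht
        · change A (v (t + 1)) = B (v t)
          rw [hv (t + 1) (by lia), hv t (by lia), map_zero, map_zero]
    · rintro (_ | t) ht
      · exact absurd ht p.not_lt_zero
      · exact hv t (by lia)
  obtain ⟨η, -, hη0, hη⟩ := exists_dual_sequence A B (B (x 0)) hnot
  refine ⟨p + 1, splits_Lblk (η := η)
    (ξ := fun i => if i ≤ p then η i ∘ₗ B else η (i - 1) ∘ₗ A) hx (by simpa using hη0)
    (fun i hi v => ?_) fun i hi v => by simp [Nat.lt_succ_iff.1 hi]⟩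
  obtain hi' | rfl := Nat.lt_succ_iff_lt_or_eq.1 hi
  · simp [Nat.succ_le_of_lt hi', hη i hi']
  · simp

theorem splits_Jmat_one {C B : V →ₗ[ℂ] W} {k : ℕ} {x : ℕ → V} {η : ℕ → Dual ℂ W}
    (hx : IsEChain C B (k + 1) x) (hη : ∀ i, k < i → η i = 0) (h0 : η 0 (B (x 0)) ≠ 0)
    (h1 : ∀ i < k + 1, ∀ v, η i (C v) = η (i + 1) (B v)) : Splits C B (Jmat (k + 1) 0, 1) := by
  obtain ⟨-, hx0, hx1⟩ := hx
  have hJ (i j : Fin (k + 1)) : Jmat (k + 1) 0 i j = if (j : ℕ) = i + 1 then 1 else 0 := by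
    simpa using Jmat_zero_pow_apply 1 i j
  have hunit : IsUnit (Matrix.of fun i j : Fin (k + 1) => η i (B (x j))) := by
    refine isUnit_of_toeplitz (a := fun i j => η i (B (x j))) h0.isUnit (fun i hi => ?_)
      fun i j hi hj => ?_
    · rw [← h1 i (by lia), hx0, map_zero]
    · rw [← h1 i (by lia), hx1 j hj]
  refine ⟨fun j => x j, fun i => B (x i), fun j => η j ∘ₗ B, fun i => η i,
    ⟨fun j => ?_, fun j => by simp [Matrix.one_apply]⟩,
    ⟨fun i v => ?_, fun i v => by simp [Matrix.one_apply]⟩, hunit, hunit⟩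
  · cases j using Fin.cases with
    | zero => simp [hJ, hx0]
    | succ j =>
      have : ∀ i : Fin (k + 1), (j : ℕ) = i ↔ j.castSucc = i := fun i => by simp [Fin.ext_iff]
      simp [hJ, hx1, this]
  · rw [h1 i i.2]
    cases i using Fin.lastCases with
    | last =>
      have : ∀ j : Fin (k + 1), (j : ℕ) ≠ k + 1 := fun j => j.2.ne
      simp [hJ, hη, this]
    | cast i =>
      have : ∀ j : Fin (k + 1), (j : ℕ) = i + 1 ↔ j = i.succ := fun i => by simp [Fin.ext_iff]
      simp [hJ, this]

theorem exists_splits_Jmat_one [FiniteDimensional ℂ V] [FiniteDimensional ℂ W] {C B : V →ₗ[ℂ] W}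
    (h : NoLChain C B) {v : V} (hv : v ≠ 0) (hC : C v = 0) :
    ∃ k, Splits C B (Jmat (k + 1) 0, 1) := by
  obtain ⟨k, x, hx, hmax⟩ := exists_maximal_isEChain h hv hC
  have hnot : ¬ ∃ v : ℕ → V, (∀ i, k + 1 ≤ i → v i = 0) ∧ C (v 0) = B (x 0) ∧
      ∀ i, i < k → C (v (i + 1)) = B (v i) := by
    rintro ⟨v, -, hv0, hv1⟩
    refine hmax (fun t => Nat.casesOn t (x 0) v) ⟨hx.1, hx.2.1, ?_⟩
    rintro (_ | t) ht
    · exact hv0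
    · exact hv1 t (by lia)
  obtain ⟨η, hη, h0, h1⟩ := exists_dual_sequence C B (B (x 0)) hnot
  exact ⟨k, splits_Jmat_one hx hη h0 h1⟩

theorem exists_eigenvector_of_injective [FiniteDimensional ℂ W] [Nontrivial V] (A : V →ₗ[ℂ] W)
    {B : V →ₗ[ℂ] W} (hB : Function.Injective B) (h : finrank ℂ W ≤ finrank ℂ V) :
    ∃ μ : ℂ, ∃ v, v ≠ 0 ∧ (A - μ • B) v = 0 := by
  have : FiniteDimensional ℂ V := FiniteDimensional.of_injective B hB
  let e : V ≃ₗ[ℂ] W := LinearMap.linearEquivOfInjective B hB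
    ((LinearMap.finrank_le_finrank_of_injective hB).antisymm h)
  obtain ⟨μ, hμ⟩ := Module.End.exists_eigenvalue (e.symm.toLinearMap ∘ₗ A)
  obtain ⟨v, hv⟩ := hμ.exists_hasEigenvector
  have hAv : A v = e (μ • v) := e.symm_apply_eq.1 hv.apply_eq_smul
  refine ⟨μ, v, hv.2, ?_⟩
  rw [LinearMap.sub_apply, hAv, map_smul]
  exact sub_self _

theorem exists_splits_of_noLChain [FiniteDimensional ℂ V] [FiniteDimensional ℂ W] [Nontrivial V]
    {A B : V →ₗ[ℂ] W} (hAB : NoLChain A B) (h : finrank ℂ W ≤ finrank ℂ V) :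
    ∃ b : KBlock, 0 < b.rows + b.cols ∧ Splits A B b.toPencil := by
  by_cases hB : Function.Injective B
  · obtain ⟨μ, v, hv, hμ⟩ := exists_eigenvector_of_injective A hB h
    obtain ⟨k, hk⟩ := exists_splits_Jmat_one (hAB.sub_smul μ) hv hμ
    refine ⟨KBlock.E (k + 1) μ, Nat.add_pos_left k.succ_pos _, ?_⟩
    have hE := hk.of_sub_smul
    rwa [← Jmat_eq_add] at hE
  · rw [injective_iff_map_eq_zero] at hB
    push Not at hB
    obtain ⟨v, hBv, hv⟩ := hB
    obtain ⟨k, hk⟩ := exists_splits_Jmat_one hAB.swap hv hBv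
    exact ⟨KBlock.Einf (k + 1), Nat.add_pos_left k.succ_pos _, hk.swap⟩

theorem exists_splits [FiniteDimensional ℂ V] [FiniteDimensional ℂ W] (A B : V →ₗ[ℂ] W)
    (hpos : 0 < finrank ℂ V + finrank ℂ W) :
    ∃ b : KBlock, 0 < b.rows + b.cols ∧ Splits A B b.toPencil := by
  by_cases hAB : NoLChain A B
  swap
  · obtain ⟨p, hp⟩ := exists_splits_Lblk (exists_isLChain_of_not_noLChain hAB)
    exact ⟨KBlock.L p, Nat.add_pos_right _ p.succ_pos, hp⟩
  by_cases hdual : NoLChain A.dualMap B.dualMap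
  swap
  · obtain ⟨p, hp⟩ := exists_splits_Lblk (exists_isLChain_of_not_noLChain hdual)
    exact ⟨KBlock.LT p, Nat.add_pos_left p.succ_pos _, hp.of_dual⟩
  have hle := hAB.finrank_le
  have hge := hdual.finrank_le
  rw [Subspace.dual_finrank_eq, Subspace.dual_finrank_eq] at hge
  have : Nontrivial V := Module.nontrivial_of_finrank_pos (R := ℂ) (by lia)
  exact exists_splits_of_noLChain hAB hge

end Splits

/-! ### Existence of the Kronecker canonical form -/

section Model

open Module (Dual finrank Basis)

variable {V W : Type*} [AddCommGroup V] [Module ℂ V] [AddCommGroup W] [Module ℂ W]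

/-- The pencil `A - λ B` of linear maps is given by the matrix pencil `M` in suitable bases. -/
def IsModel {m n : ℕ} (A B : V →ₗ[ℂ] W) (M : Pencil m n) : Prop :=
  ∃ (e : Basis (Fin n) ℂ V) (f : Basis (Fin m) ℂ W),
    (∀ j, A (e j) = ∑ i, M.1 i j • f i) ∧ ∀ j, B (e j) = ∑ i, M.2 i j • f i

theorem exists_basis_sum_ker {n : ℕ} {κ : Type*} (x : Fin n → V) (ξ : Fin n → Dual ℂ V)
    (h : IsUnit (Matrix.of fun i j => ξ i (x j))) (b : Basis κ ℂ (LinearMap.ker (LinearMap.pi ξ))) :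
    ∃ e : Basis (Fin n ⊕ κ) ℂ V, (∀ j, e (.inl j) = x j) ∧ ∀ k, e (.inr k) = b k := by
  let F : ((Fin n → ℂ) × LinearMap.ker (LinearMap.pi ξ)) →ₗ[ℂ] V :=
    (Fintype.linearCombination ℂ x).coprod (LinearMap.ker (LinearMap.pi ξ)).subtype
  have hξ (c) (u : LinearMap.ker (LinearMap.pi ξ)) :
      LinearMap.pi ξ (F (c, u)) = (Matrix.of fun i j => ξ i (x j)) *ᵥ c := by
    rw [LinearMap.coprod_apply, map_add, Submodule.subtype_apply, LinearMap.mem_ker.1 u.2, add_zero]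
    ext i
    simp [Fintype.linearCombination_apply, Matrix.mulVec, dotProduct, mul_comm]
  have hF : Function.Bijective F := by
    refine ⟨(injective_iff_map_eq_zero F).2 ?_, fun v => ?_⟩
    · rintro ⟨c, u⟩ hcu
      obtain rfl : c = 0 := Matrix.mulVec_injective_iff_isUnit.2 h <| by
        rw [← hξ c u, hcu, map_zero, mulVec_zero]
      simpa [F] using hcu
    · obtain ⟨c, hc⟩ := Matrix.mulVec_surjective_iff_isUnit.2 h (LinearMap.pi ξ v)
      have hmem : v - F (c, 0) ∈ LinearMap.ker (LinearMap.pi ξ) := by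
        rw [LinearMap.mem_ker, map_sub, hξ, hc, sub_self]
      exact ⟨(c, ⟨_, hmem⟩), by simp [F]⟩
  refine ⟨((Pi.basisFun ℂ (Fin n)).prod b).map (.ofBijective F hF), fun j => ?_, fun k => ?_⟩
  · simp [F]
  · simp [F]

theorem finrank_eq_add_finrank_ker [FiniteDimensional ℂ V] {n : ℕ} (x : Fin n → V)
    (ξ : Fin n → Dual ℂ V) (h : IsUnit (Matrix.of fun i j => ξ i (x j))) :
    finrank ℂ V = n + finrank ℂ (LinearMap.ker (LinearMap.pi ξ)) := by
  obtain ⟨e, -⟩ := exists_basis_sum_ker x ξ h (Module.finBasis ℂ _)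
  simpa using Module.finrank_eq_card_basis e

theorem apply_reindex_eq_sum_dsum {m n p q : ℕ} {A : V →ₗ[ℂ] W} {M : Matrix (Fin m) (Fin n) ℂ}
    {N : Matrix (Fin p) (Fin q) ℂ} {e : Basis (Fin n ⊕ Fin q) ℂ V} {f : Basis (Fin m ⊕ Fin p) ℂ W}
    (hM : ∀ j, A (e (.inl j)) = ∑ i, M i j • f (.inl i))
    (hN : ∀ j, A (e (.inr j)) = ∑ i, N i j • f (.inr i)) (j : Fin (n + q)) :
    A (e.reindex finSumFinEquiv j) = ∑ i,
      (fromBlocks M 0 0 N).submatrix finSumFinEquiv.symm finSumFinEquiv.symm i j •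
        f.reindex finSumFinEquiv i := by
  obtain ⟨j, rfl⟩ := finSumFinEquiv.surjective j
  rw [← finSumFinEquiv.sum_comp]
  rcases j with j | j
  · simp [hM]
  · simp [hN]

theorem Splits.exists_complement [FiniteDimensional ℂ V] [FiniteDimensional ℂ W]
    {m n : ℕ} {A B : V →ₗ[ℂ] W} {M : Pencil m n} (h : Splits A B M) :
    ∃ (V' : Submodule ℂ V) (W' : Submodule ℂ W) (hA : ∀ v ∈ V', A v ∈ W') (hB : ∀ v ∈ V', B v ∈ W'),
      finrank ℂ V = n + finrank ℂ V' ∧ finrank ℂ W = m + finrank ℂ W' ∧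
      ∀ {p q : ℕ} {N : Pencil p q}, IsModel (A.restrict hA) (B.restrict hB) N →
        IsModel A B (M.dsum N) := by
  obtain ⟨x, y, ξ, η, ⟨hA, hB⟩, ⟨hA', hB'⟩, hx, hy⟩ := h
  have hrestr {C : V →ₗ[ℂ] W} {X : Matrix (Fin m) (Fin n) ℂ}
      (hX : ∀ i v, η i (C v) = ∑ j, X i j * ξ j v) (v) (hv : v ∈ LinearMap.ker (LinearMap.pi ξ)) :
      C v ∈ LinearMap.ker (LinearMap.pi η) := by
    rw [LinearMap.mem_ker] at hv ⊢
    ext i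
    have hv' (j) : ξ j v = 0 := congrFun hv j
    simp [hX, hv']
  refine ⟨_, _, hrestr hA', hrestr hB', finrank_eq_add_finrank_ker x ξ hx,
    finrank_eq_add_finrank_ker y η hy, ?_⟩
  rintro p q N ⟨e, f, hNA, hNB⟩
  obtain ⟨e', hex, hee⟩ := exists_basis_sum_ker x ξ hx e
  obtain ⟨f', hfy, hff⟩ := exists_basis_sum_ker y η hy f
  refine ⟨e'.reindex finSumFinEquiv, f'.reindex finSumFinEquiv,
    apply_reindex_eq_sum_dsum (fun j => by simp [hex, hfy, hA]) fun j => ?_,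
    apply_reindex_eq_sum_dsum (fun j => by simp [hex, hfy, hB]) fun j => ?_⟩
  · simpa [hee, hff] using congrArg Subtype.val (hNA j)
  · simpa [hee, hff] using congrArg Subtype.val (hNB j)

theorem exists_isModel [FiniteDimensional ℂ V] [FiniteDimensional ℂ W] (A B : V →ₗ[ℂ] W) :
    ∃ l, IsModel A B (pencilOfList l) := by
  induction hN : finrank ℂ V + finrank ℂ W using Nat.strong_induction_on generalizing V W with
  | _ N ih
  obtain rfl | hpos := N.eq_zero_or_pos
  · obtain ⟨hV, hW⟩ := Nat.add_eq_zero_iff.1 hN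
    exact ⟨[], Module.finBasisOfFinrankEq ℂ V hV, Module.finBasisOfFinrankEq ℂ W hW,
      fun j => j.elim0, fun j => j.elim0⟩
  obtain ⟨b, hb, hsplit⟩ := exists_splits A B (hpos.trans_eq hN.symm)
  obtain ⟨V', W', hA, hB, hV, hW, hmodel⟩ := hsplit.exists_complement
  obtain ⟨l, hl⟩ := ih _ (by lia) (A.restrict hA) (B.restrict hB) rfl
  exact ⟨b :: l, hmodel hl⟩

theorem toMatrix_eq_of_apply_eq_sum {m n : ℕ} {A : V →ₗ[ℂ] W} {M : Matrix (Fin m) (Fin n) ℂ}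
    {e : Basis (Fin n) ℂ V} {f : Basis (Fin m) ℂ W} (h : ∀ j, A (e j) = ∑ i, M i j • f i) :
    LinearMap.toMatrix e f A = M := by
  ext i j
  simp [LinearMap.toMatrix_apply, h, Finsupp.single_apply]

theorem IsModel.strictEquiv {m n m' n' : ℕ} {P : Pencil m n} {M : Pencil m' n'}
    (h : IsModel P.1.mulVecLin P.2.mulVecLin M) :
    ∃ (hm : m' = m) (hn : n' = n), Pencil.StrictEquiv (Pencil.cast hm hn M) P := by
  obtain ⟨e, f, h1, h2⟩ := h
  obtain rfl : m = m' := by simpa using Module.finrank_eq_card_basis f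
  obtain rfl : n = n' := by simpa using Module.finrank_eq_card_basis e
  have hinv : (f.toMatrix (Pi.basisFun ℂ (Fin m)))⁻¹ = (Pi.basisFun ℂ (Fin m)).toMatrix f :=
    Matrix.inv_eq_left_inv (Basis.toMatrix_mul_toMatrix_flip _ _)
  have hmul {X Y : Matrix (Fin m) (Fin n) ℂ} (hXY : ∀ j, X.mulVecLin (e j) = ∑ i, Y i j • f i) :
      (f.toMatrix (Pi.basisFun ℂ (Fin m)))⁻¹ * Y * e.toMatrix (Pi.basisFun ℂ (Fin n)) = X := by
    rw [hinv, ← toMatrix_eq_of_apply_eq_sum hXY,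
      basis_toMatrix_mul_linearMap_toMatrix_mul_basis_toMatrix, ← Matrix.toLin'_apply',
      ← Matrix.toLin_eq_toLin', LinearMap.toMatrix_toLin]
  exact ⟨rfl, rfl, f.toMatrix (Pi.basisFun ℂ (Fin m)), e.toMatrix (Pi.basisFun ℂ (Fin n)),
    .of_mul_eq_one _ (Basis.toMatrix_mul_toMatrix_flip _ _),
    .of_mul_eq_one _ (Basis.toMatrix_mul_toMatrix_flip _ _), hmul h1, hmul h2⟩

end Model

theorem exists_weakRepresentsE {m n : ℕ} (P : Pencil m n) : ∃ s, WeakRepresentsE P s := by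
  obtain ⟨l, hl⟩ := exists_isModel P.1.mulVecLin P.2.mulVecLin
  obtain ⟨hm, hn, h⟩ := hl.strictEquiv
  exact ⟨l, l, hm, hn, rfl, h⟩

theorem Pencil.cast_dsum_of_isEmpty {m n m' n' : ℕ} (X : Pencil 0 0) (M : Pencil m n)
    (hm : 0 + m = m') (hn : 0 + n = n') :
    Pencil.cast hm hn (X.dsum M) =
      M.cast ((zero_add m).symm.trans hm) ((zero_add n).symm.trans hn) := by
  subst hm hn
  have hidx {k : ℕ} (i : Fin (0 + k)) : finSumFinEquiv.symm i = .inr (finCongr (zero_add k) i) := by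
    rw [Equiv.symm_apply_eq]
    ext
    simp
  refine Prod.ext (Matrix.ext fun i j => ?_) (Matrix.ext fun i j => ?_) <;>
    simp [Pencil.cast, Pencil.dsum, hidx]

theorem WeakRepresentsE.cons_zeroBlock {m n : ℕ} {P : Pencil m n} {s : Multiset KBlock}
    (h : WeakRepresentsE P s) (μ : Option ℂ) : WeakRepresentsE P (Eb μ 0 ::ₘ s) := by
  obtain ⟨l, hm, hn, rfl, hl⟩ := h
  have hP {X : Pencil 0 0} {hm' hn'} :
      Pencil.StrictEquiv (Pencil.cast hm' hn' (X.dsum (pencilOfList l))) P :=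
    (Pencil.cast_dsum_of_isEmpty X _ hm' hn').symm ▸ hl
  cases μ with
  | none => exact ⟨.Einf 0 :: l, (zero_add _).trans hm, (zero_add _).trans hn, rfl, hP⟩
  | some μ => exact ⟨.E 0 μ :: l, (zero_add _).trans hm, (zero_add _).trans hn, rfl, hP⟩

theorem WeakRepresentsE.add_zeroBlocks {m n : ℕ} {P : Pencil m n} {s : Multiset KBlock}
    (h : WeakRepresentsE P s) (z : Multiset (Option ℂ)) :
    WeakRepresentsE P (s + z.map (Eb · 0)) := by
  induction z using Multiset.induction with
  | empty => simpa using h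
  | cons μ z ih => simpa using ih.cons_zeroBlock μ

/-- **Theorem 2.2**: if `orbᵉ P2 ⊆ closure (orbᵉ P1)`, then the Kronecker
canonical form of `P2` can be obtained from that of `P1` by a finite sequence
of structure transitions of the types G1–G6. -/
theorem kcf_trans_of_orbE_subset_closure {m n : ℕ} (P1 P2 : Pencil m n)
    (h : Pencil.orbE P2 ⊆ closure (Pencil.orbE P1)) :
    ∃ s1 s2 : Multiset KBlock, WeakRepresentsE P1 s1 ∧ WeakRepresentsE P2 s2 ∧
      Relation.ReflTransGen TransG s1 s2 := by
  obtain ⟨s, hs⟩ := exists_weakRepresentsE P1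
  obtain ⟨t, ht⟩ := exists_weakRepresentsE P2
  have hmem : P2 ∈ Pencil.orbE P2 := ⟨1, 1, isUnit_one, isUnit_one, by simp, by simp⟩
  obtain ⟨z, w, hzw⟩ := (dominates_of_mem_closure hs ht (h hmem)).degen
  exact ⟨_, _, hs.add_zeroBlocks z, ht.add_zeroBlocks w, hzw⟩
end
end

section
/- For all integers j, k with 1 ≤ j ≤ k, the congruence orbit of the skew-symmetric pencil M_{j−1} ⊕ M_{k+1} is contained in the closure of the congruence orbit of the skew-symmetric pencil M_j ⊕ M_k (both pencils have size (2j+2k+2) × (2j+2k+2)). -/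
/-!
Basic framework: a complex `m × n` matrix pencil `A - λ B` is formalized as the
pair `(A, B)` of matrices.  We define strict equivalence, congruence,
skew-symmetry, orbits, direct sums, and the cover relations for the orbit
closure hierarchies (in the Euclidean topology).
-/

open Matrix

noncomputable section

/-!
Since `M_m` is the skew-symmetric pencil `[[0, L_m], [-L_mᵀ, 0]]`, and since every strict
equivalence `S⁻¹ P R` is induced by the congruence of `[[0, P], [-Pᵀ, 0]]` by `S⁻ᵀ ⊕ R`, it
suffices to degenerate `L_{p+1} ⊕ L_k` to `L_p ⊕ L_{k+1}` (`p ≤ k`) under strict equivalence.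
A block triangular pencil degenerates to its diagonal part, because rescaling its blocks
multiplies the off-diagonal block by any nonzero `ε`. Finally, `L_{p+1} ⊕ L_k` is strictly
equivalent to `[[L_p, 0], [C, L_{k+1}]]` for a constant `C` with a single nonzero entry: moving the
first row and column of `L_{p+1}` in front of `L_k` gives this pencil up to the entry of `F_{k+1}`
in its first row, and that entry is restored by a unipotent change of basis built from shift
matrices `N`, `N'` with `L_p N' = N L_{k+1}`.
-/

namespace Pencil

section Congruence

variable {n : ℕ} {P Q R : Pencil n n}

lemma Congruent.trans (hPQ : Congruent P Q) (hQR : Congruent Q R) : Congruent P R := by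
  obtain ⟨S, hS, hS₁, hS₂⟩ := hPQ
  obtain ⟨T, hT, hT₁, hT₂⟩ := hQR
  refine ⟨S * T, hS.mul hT, ?_, ?_⟩
  · rw [← hT₁, ← hS₁, transpose_mul]
    simp only [Matrix.mul_assoc]
  · rw [← hT₂, ← hS₂, transpose_mul]
    simp only [Matrix.mul_assoc]

lemma orbC_subset_orbC (h : Congruent P Q) : orbC Q ⊆ orbC P :=
  fun _ hR => h.trans hR

lemma orbC_subset_closure_orbC (h : Q ∈ closure (orbC P)) : orbC Q ⊆ closure (orbC P) := by
  rintro R ⟨S, hS, hS₁, hS₂⟩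
  let congr (X : Pencil n n) : Pencil n n := (Sᵀ * X.1 * S, Sᵀ * X.2 * S)
  have congr_Q : congr Q = R := Prod.ext hS₁ hS₂
  rw [← congr_Q]
  exact map_mem_closure (by fun_prop) h fun X hX => hX.trans ⟨S, hS, rfl, rfl⟩

end Congruence

section StrictEquivalence

variable {m n : ℕ} {P Q R : Pencil m n}

lemma StrictEquiv.trans (hPQ : StrictEquiv P Q) (hQR : StrictEquiv Q R) : StrictEquiv P R := by
  obtain ⟨S, T, hS, hT, h₁, h₂⟩ := hPQ
  obtain ⟨S', T', hS', hT', h₁', h₂'⟩ := hQR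
  refine ⟨S * S', T * T', hS.mul hS', hT.mul hT', ?_, ?_⟩
  · rw [← h₁', ← h₁, Matrix.mul_inv_rev]
    simp only [Matrix.mul_assoc]
  · rw [← h₂', ← h₂, Matrix.mul_inv_rev]
    simp only [Matrix.mul_assoc]

lemma orbE_subset_orbE (h : StrictEquiv P Q) : orbE Q ⊆ orbE P :=
  fun _ hR => h.trans hR

end StrictEquivalence

section Enumeration

variable {m n : ℕ} {α β : Type*}

/-- The pencil `A - λ B` with rows and columns indexed by arbitrary finite types, as a `Pencil`
through enumerations `r` and `c` of these types; block computations take place on sum types. -/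
def ofEquiv (r : Fin m ≃ α) (c : Fin n ≃ β) (A B : Matrix α β ℂ) : Pencil m n :=
  (A.submatrix r c, B.submatrix r c)

/-- The identification of `Fin N` with `Fin m ⊕ Fin n` for `m + n = N` that underlies
`Pencil.dsum` and `skewPair`; the equation absorbs the index transport in `Pencil.cast`. -/
def finSplit {N : ℕ} (h : m + n = N) : Fin N ≃ Fin m ⊕ Fin n :=
  (finCongr h.symm).trans finSumFinEquiv.symm

lemma cast_dsum_eq_ofEquiv {p q M N : ℕ} (hM : m + p = M) (hN : n + q = N)
    (P : Pencil m n) (Q : Pencil p q) :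
    cast hM hN (dsum P Q) =
      ofEquiv (finSplit hM) (finSplit hN) (fromBlocks P.1 0 0 Q.1) (fromBlocks P.2 0 0 Q.2) :=
  rfl

lemma strictEquiv_ofEquiv [Fintype α] [DecidableEq α] [Fintype β] [DecidableEq β]
    {A B A' B' : Matrix α β ℂ} {U : Matrix α α ℂ} {V : Matrix β β ℂ}
    (hU : IsUnit U) (hV : IsUnit V) (hA : A * V = U * A') (hB : B * V = U * B')
    (r r' : Fin m ≃ α) (c c' : Fin n ≃ β) :
    StrictEquiv (ofEquiv r c A B) (ofEquiv r' c' A' B') := by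
  have hU' : IsUnit (U.submatrix r r') := (isUnit_submatrix_equiv r r').2 hU
  have inv_mul_mul {X X' : Matrix α β ℂ} (hX : X * V = U * X') :
      (U.submatrix r r')⁻¹ * X.submatrix r c * V.submatrix c c' = X'.submatrix r' c' := by
    rw [Matrix.mul_assoc, submatrix_mul_equiv, hX, ← submatrix_mul_equiv U X' r r' c',
      nonsing_inv_mul_cancel_left _ _ ((isUnit_iff_isUnit_det _).1 hU')]
  exact ⟨_, _, hU', (isUnit_submatrix_equiv c c').2 hV, inv_mul_mul hA, inv_mul_mul hB⟩

lemma congruent_ofEquiv (e e' : Fin n ≃ α) (A B : Matrix α α ℂ) :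
    Congruent (ofEquiv e e A B) (ofEquiv e' e' A B) := by
  classical
  let _ : Fintype α := .ofEquiv _ e
  have permute (X : Matrix α α ℂ) :
      ((1 : Matrix α α ℂ).submatrix e e')ᵀ * X.submatrix e e * (1 : Matrix α α ℂ).submatrix e e' =
        X.submatrix e' e' := by
    rw [transpose_submatrix, submatrix_mul_equiv, submatrix_mul_equiv, transpose_one,
      Matrix.one_mul, Matrix.mul_one]
  exact ⟨_, (isUnit_submatrix_equiv e e').2 isUnit_one, permute A, permute B⟩

lemma orbC_ofEquiv_congr (e e' : Fin n ≃ α) (A B : Matrix α α ℂ) :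
    orbC (ofEquiv e e A B) = orbC (ofEquiv e' e' A B) :=
  (orbC_subset_orbC (congruent_ofEquiv e' e A B)).antisymm
    (orbC_subset_orbC (congruent_ofEquiv e e' A B))

end Enumeration

section Triangular

variable {m n : ℕ} {α₁ α₂ β₁ β₂ : Type*}
  {A₁ B₁ : Matrix α₁ β₁ ℂ} {A₂ B₂ A₂' B₂' : Matrix α₂ β₂ ℂ} {C D : Matrix α₂ β₁ ℂ}

lemma strictEquiv_fromBlocks_smul [Finite α₁] [Finite α₂] [Finite β₁] [Finite β₂]
    (r : Fin m ≃ α₁ ⊕ α₂) (c : Fin n ≃ β₁ ⊕ β₂)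
    {ε : ℂ} (hε : ε ≠ 0) :
    StrictEquiv
      (ofEquiv r c (fromBlocks A₁ 0 C A₂) (fromBlocks B₁ 0 D B₂))
      (ofEquiv r c (fromBlocks A₁ 0 (ε • C) A₂) (fromBlocks B₁ 0 (ε • D) B₂)) := by
  classical
  cases nonempty_fintype α₁
  cases nonempty_fintype α₂
  cases nonempty_fintype β₁
  cases nonempty_fintype β₂
  have hU : IsUnit (fromBlocks (ε • 1) 0 0 1 : Matrix (α₁ ⊕ α₂) (α₁ ⊕ α₂) ℂ) :=
    isUnit_fromBlocks_zero₁₂.2 ⟨isUnit_one.smul (Units.mk0 ε hε), isUnit_one⟩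
  have hV : IsUnit (fromBlocks (ε • 1) 0 0 1 : Matrix (β₁ ⊕ β₂) (β₁ ⊕ β₂) ℂ) :=
    isUnit_fromBlocks_zero₁₂.2 ⟨isUnit_one.smul (Units.mk0 ε hε), isUnit_one⟩
  refine strictEquiv_ofEquiv hU hV ?_ ?_ r r c c <;> simp [fromBlocks_multiply]

theorem fromBlocks_zero_mem_closure_orbE [Finite α₁] [Finite α₂] [Finite β₁] [Finite β₂]
    (r : Fin m ≃ α₁ ⊕ α₂) (c : Fin n ≃ β₁ ⊕ β₂) :
    ofEquiv r c (fromBlocks A₁ 0 0 A₂) (fromBlocks B₁ 0 0 B₂) ∈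
      closure (orbE (ofEquiv r c (fromBlocks A₁ 0 C A₂) (fromBlocks B₁ 0 D B₂))) := by
  let path (ε : ℂ) : Pencil m n :=
    ofEquiv r c (fromBlocks A₁ 0 (ε • C) A₂) (fromBlocks B₁ 0 (ε • D) B₂)
  have path_continuous : Continuous path := by
    unfold path ofEquiv
    fun_prop
  have path_zero : path 0 = ofEquiv r c (fromBlocks A₁ 0 0 A₂) (fromBlocks B₁ 0 0 B₂) := by
    simp only [path, zero_smul]
  rw [← path_zero]
  exact map_mem_closure path_continuous (dense_compl_singleton (0 : ℂ) 0)
    fun ε hε => strictEquiv_fromBlocks_smul r c hε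

lemma strictEquiv_fromBlocks_of_intertwine [Finite α₁] [Fintype α₂] [Fintype β₁] [Finite β₂]
    {N : Matrix α₁ α₂ ℂ} {N' : Matrix β₁ β₂ ℂ}
    (hA : A₁ * N' = N * A₂) (hB : B₁ * N' = N * B₂) (hC : N * C = 0) (hD : N * D = 0)
    (hA₂ : A₂' + C * N' = A₂) (hB₂ : B₂' + D * N' = B₂)
    (r r' : Fin m ≃ α₁ ⊕ α₂) (c c' : Fin n ≃ β₁ ⊕ β₂) :
    StrictEquiv
      (ofEquiv r c (fromBlocks A₁ 0 C A₂') (fromBlocks B₁ 0 D B₂'))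
      (ofEquiv r' c' (fromBlocks A₁ 0 C A₂) (fromBlocks B₁ 0 D B₂)) := by
  classical
  cases nonempty_fintype α₁
  cases nonempty_fintype β₂
  have hU : IsUnit (fromBlocks 1 N 0 1) := isUnit_fromBlocks_zero₂₁.2 ⟨isUnit_one, isUnit_one⟩
  have hV : IsUnit (fromBlocks 1 N' 0 1) := isUnit_fromBlocks_zero₂₁.2 ⟨isUnit_one, isUnit_one⟩
  refine strictEquiv_ofEquiv hU hV ?_ ?_ r r' c c'
  · simp [fromBlocks_multiply, hA, hC, ← hA₂, add_comm]
  · simp [fromBlocks_multiply, hB, hD, ← hB₂, add_comm]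

end Triangular

section Skew

variable {α β γ δ : Type*}

/-- The skew-symmetric matrix `[[0, X], [-Xᵀ, 0]]` on the sum of the index types of `X`; it is
`skewPair` before the enumeration of its indices. -/
def skewBlock (X : Matrix α β ℂ) : Matrix (α ⊕ β) (α ⊕ β) ℂ :=
  fromBlocks 0 X (-Xᵀ) 0

lemma skewBlock_submatrix (r : γ ≃ α) (c : δ ≃ β) (X : Matrix α β ℂ) :
    skewBlock (X.submatrix r c) =
      (skewBlock X).submatrix (r.sumCongr c) (r.sumCongr c) := by
  ext (i | i) (j | j) <;> rfl

lemma fromBlocks_skewBlock (X : Matrix α β ℂ) (Y : Matrix γ δ ℂ) :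
    fromBlocks (skewBlock X) 0 0 (skewBlock Y) =
      (skewBlock (fromBlocks X 0 0 Y)).submatrix
        (Equiv.sumSumSumComm α β γ δ) (Equiv.sumSumSumComm α β γ δ) := by
  ext ((i | i) | (i | i)) ((j | j) | (j | j)) <;> simp [skewBlock]

lemma transpose_mul_skewBlock_mul [Fintype α] [Fintype β]
    (U : Matrix α α ℂ) (V : Matrix β β ℂ) (X : Matrix α β ℂ) :
    (fromBlocks Uᵀ 0 0 V)ᵀ * skewBlock X * fromBlocks Uᵀ 0 0 V = skewBlock (U * X * V) := by
  simp [skewBlock, fromBlocks_transpose, fromBlocks_multiply, Matrix.mul_assoc]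

variable {m n : ℕ}

/-- The skew-symmetric pencil `[[0, P], [-Pᵀ, 0]]` of a pencil `P`; `Mblk m` is `skew (Lblk m)`. -/
def skew (P : Pencil m n) : Pencil (m + n) (m + n) :=
  (skewPair P.1, skewPair P.2)

lemma continuous_skew : Continuous (skew : Pencil m n → Pencil (m + n) (m + n)) := by
  unfold skew skewPair
  fun_prop

lemma StrictEquiv.congruent_skew {P Q : Pencil m n} (h : StrictEquiv P Q) :
    Congruent (skew P) (skew Q) := by
  obtain ⟨S, R, hS, hR, h₁, h₂⟩ := h
  let e := (finSumFinEquiv (m := m) (n := n)).symm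
  let T := fromBlocks (S⁻¹)ᵀ 0 0 R
  have hT : IsUnit T :=
    isUnit_fromBlocks_zero₁₂.2 ⟨(isUnit_transpose _).2 (isUnit_nonsing_inv_iff.2 hS), hR⟩
  have skewPair_congr (X : Matrix (Fin m) (Fin n) ℂ) :
      (T.submatrix e e)ᵀ * skewPair X * T.submatrix e e = skewPair (S⁻¹ * X * R) := by
    change (T.submatrix e e)ᵀ * (skewBlock X).submatrix e e * T.submatrix e e =
      (skewBlock (S⁻¹ * X * R)).submatrix e e
    rw [transpose_submatrix, submatrix_mul_equiv, submatrix_mul_equiv,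
      transpose_mul_skewBlock_mul]
  refine ⟨T.submatrix e e, (isUnit_submatrix_equiv e e).2 hT, ?_, ?_⟩
  · exact (skewPair_congr P.1).trans (congrArg skewPair h₁)
  · exact (skewPair_congr P.2).trans (congrArg skewPair h₂)

lemma cast_skew_mem_closure_orbC {N : ℕ} (h : m + n = N) {P Q : Pencil m n}
    (hQ : Q ∈ closure (orbE P)) :
    cast h h (skew Q) ∈ closure (orbC (cast h h (skew P))) := by
  subst h
  change skew Q ∈ closure (orbC (skew P))
  exact map_mem_closure continuous_skew hQ fun _ => StrictEquiv.congruent_skew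

section DirectSum

variable {p q M N K : ℕ} (hM : m + p = M) (hN : n + q = N) (hK : M + N = K)
  (hK' : m + n + (p + q) = K) (P : Pencil m n) (Q : Pencil p q)

lemma cast_skew_dsum_eq_ofEquiv :
    cast hK hK (skew (cast hM hN (dsum P Q))) =
      ofEquiv ((finSplit hK).trans ((finSplit hM).sumCongr (finSplit hN)))
        ((finSplit hK).trans ((finSplit hM).sumCongr (finSplit hN)))
        (skewBlock (fromBlocks P.1 0 0 Q.1)) (skewBlock (fromBlocks P.2 0 0 Q.2)) := by
  have enumerate := skewBlock_submatrix (finSplit hM) (finSplit hN)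
  exact Prod.ext (congrArg (submatrix · (finSplit hK) (finSplit hK)) (enumerate _))
    (congrArg (submatrix · (finSplit hK) (finSplit hK)) (enumerate _))

/-- The indices of `dsum (skew P) (skew Q)`, regrouped into the row indices of `P` and `Q` and the
column indices of `P` and `Q`, as in `skew (dsum P Q)`. -/
def regroup : Fin K ≃ (Fin m ⊕ Fin p) ⊕ (Fin n ⊕ Fin q) :=
  (finSplit hK').trans (((finSplit rfl).sumCongr (finSplit rfl)).trans (Equiv.sumSumSumComm ..))

lemma cast_dsum_skew_eq_ofEquiv :
    cast hK' hK' (dsum (skew P) (skew Q)) =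
      ofEquiv (regroup hK') (regroup hK')
        (skewBlock (fromBlocks P.1 0 0 Q.1)) (skewBlock (fromBlocks P.2 0 0 Q.2)) := by
  have enumerate (X : Matrix (Fin m) (Fin n) ℂ) (Y : Matrix (Fin p) (Fin q) ℂ) :
      fromBlocks (skewPair X) 0 0 (skewPair Y) =
        (skewBlock (fromBlocks X 0 0 Y)).submatrix
          (((finSplit rfl).sumCongr (finSplit rfl)).trans (Equiv.sumSumSumComm ..))
          (((finSplit rfl).sumCongr (finSplit rfl)).trans (Equiv.sumSumSumComm ..)) := by
    rw [Equiv.coe_trans, ← submatrix_submatrix, ← fromBlocks_skewBlock]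
    ext (i | i) (j | j) <;> rfl
  exact Prod.ext (congrArg (submatrix · (finSplit hK') (finSplit hK')) (enumerate _ _))
    (congrArg (submatrix · (finSplit hK') (finSplit hK')) (enumerate _ _))

lemma orbC_cast_dsum_skew :
    orbC (cast hK' hK' (dsum (skew P) (skew Q))) =
      orbC (cast hK hK (skew (cast hM hN (dsum P Q)))) := by
  rw [cast_skew_dsum_eq_ofEquiv, cast_dsum_skew_eq_ofEquiv]
  exact orbC_ofEquiv_congr ..

end DirectSum

theorem orbC_dsum_skew_subset_closure {M N K m₁ n₁ m₂ n₂ p₁ q₁ p₂ q₂ : ℕ}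
    {P₁ : Pencil m₁ n₁} {P₂ : Pencil m₂ n₂} {Q₁ : Pencil p₁ q₁} {Q₂ : Pencil p₂ q₂}
    (hM : m₁ + m₂ = M) (hN : n₁ + n₂ = N) (hM' : p₁ + p₂ = M) (hN' : q₁ + q₂ = N)
    (h : cast hM' hN' (dsum Q₁ Q₂) ∈ closure (orbE (cast hM hN (dsum P₁ P₂))))
    (hK : m₁ + n₁ + (m₂ + n₂) = K) (hK' : p₁ + q₁ + (p₂ + q₂) = K) :
    orbC (cast hK' hK' (dsum (skew Q₁) (skew Q₂))) ⊆
      closure (orbC (cast hK hK (dsum (skew P₁) (skew P₂)))) := by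
  have hMN : M + N = K := by omega
  rw [orbC_cast_dsum_skew hM' hN' hMN, orbC_cast_dsum_skew hM hN hMN]
  exact orbC_subset_closure_orbC (cast_skew_mem_closure_orbC hMN h)

end Skew

section KroneckerBlocks

lemma skew_Lblk (m : ℕ) : skew (Lblk m) = Mblk m := rfl

/-- The reindexing of a direct sum that moves the first index of the second summand in front of
the first summand, so that the two summands get sizes `p + 1` and `q` instead of `p` and `q + 1`. -/
def moveHead (p q : ℕ) : Fin (p + 1) ⊕ Fin q ≃ Fin p ⊕ Fin (q + 1) where
  toFun := Sum.elim (Fin.cons (Sum.inr 0) Sum.inl) (Sum.inr ∘ Fin.succ)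
  invFun := Sum.elim (Sum.inl ∘ Fin.succ) (Fin.cons (Sum.inl 0) Sum.inr)
  left_inv := by
    rintro (i | i)
    · cases i using Fin.cases <;> rfl
    · rfl
  right_inv := by
    rintro (i | i)
    · rfl
    · cases i using Fin.cases <;> rfl

lemma fromBlocks_Fmat_succ (p k : ℕ) :
    fromBlocks (Fmat (p + 1)) 0 0 (Fmat k) =
      (fromBlocks (Fmat p) 0 (single 0 0 1) (Fmat (k + 1) - single 0 1 1)).submatrix
        (moveHead p k) (moveHead (p + 1) (k + 1)) := by
  ext (i | i) (j | j)
  · cases i using Fin.cases <;> cases j using Fin.cases <;>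
      simp [moveHead, Fmat, single_apply, eq_comm (a := (0 : Fin _))]
  · cases i using Fin.cases <;> cases j using Fin.cases <;>
      simp [moveHead, Fmat, (Fin.succ_succ_ne_one _).symm]
  · cases j using Fin.cases <;> simp [moveHead, Fmat, (Fin.succ_ne_zero _).symm]
  · simp [moveHead, Fmat, (Fin.succ_ne_zero _).symm]

lemma fromBlocks_Gmat_succ (p k : ℕ) :
    fromBlocks (Gmat (p + 1)) 0 0 (Gmat k) =
      (fromBlocks (Gmat p) 0 0 (Gmat (k + 1))).submatrix
        (moveHead p k) (moveHead (p + 1) (k + 1)) := by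
  ext (i | i) (j | j)
  · cases i using Fin.cases <;> cases j using Fin.cases <;> simp [moveHead, Gmat]
  · cases i using Fin.cases <;> simp [moveHead, Gmat]
  · cases j using Fin.cases <;> simp [moveHead, Gmat]
  · simp [moveHead, Gmat]

/-- The `p × (q + 1)` matrix, `p ≤ q`, whose `i`-th row is the unit vector `e_{i + 1}`; it is the
matrix by which the rows and columns of `L_p` are added to those of `L_q`. -/
def shiftMat {p q : ℕ} (h : p ≤ q) : Matrix (Fin p) (Fin (q + 1)) ℂ :=
  (1 : Matrix (Fin (q + 1)) (Fin (q + 1)) ℂ).submatrix (fun i => (i.castLE h).succ) (Equiv.refl _)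

variable {ι : Type*} {p q : ℕ}

lemma shiftMat_mul (h : p ≤ q) (X : Matrix (Fin (q + 1)) ι ℂ) :
    shiftMat h * X = X.submatrix (fun i => (i.castLE h).succ) id :=
  one_submatrix_mul _ _ X

lemma Fmat_mul (X : Matrix (Fin (p + 1)) ι ℂ) : Fmat p * X = X.submatrix Fin.succ id := by
  have Fmat_eq : Fmat p = (1 : Matrix (Fin (p + 1)) _ ℂ).submatrix Fin.succ (Equiv.refl _) := by
    ext i j
    simp [Fmat, one_apply, Fin.ext_iff, eq_comm]
  rw [Fmat_eq]
  exact one_submatrix_mul _ _ X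

lemma Gmat_mul (X : Matrix (Fin (p + 1)) ι ℂ) : Gmat p * X = X.submatrix Fin.castSucc id := by
  have Gmat_eq : Gmat p = (1 : Matrix (Fin (p + 1)) _ ℂ).submatrix Fin.castSucc (Equiv.refl _) := by
    ext i j
    simp [Gmat, one_apply, Fin.ext_iff, eq_comm]
  rw [Gmat_eq]
  exact one_submatrix_mul _ _ X

lemma Fmat_mul_shiftMat (h : p ≤ q) :
    Fmat p * shiftMat (Nat.add_le_add_right h 1) = shiftMat h * Fmat (q + 1) := by
  rw [Fmat_mul, shiftMat_mul]
  ext i j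
  simp [shiftMat, Fmat, one_apply, Fin.ext_iff, eq_comm]

lemma Gmat_mul_shiftMat (h : p ≤ q) :
    Gmat p * shiftMat (Nat.add_le_add_right h 1) = shiftMat h * Gmat (q + 1) := by
  rw [Gmat_mul, shiftMat_mul]
  ext i j
  simp [shiftMat, Gmat, one_apply, Fin.ext_iff, eq_comm]

lemma shiftMat_mul_single_zero [DecidableEq ι] (h : p ≤ q) (j : ι) (a : ℂ) :
    shiftMat h * single (0 : Fin (q + 1)) j a = 0 := by
  rw [shiftMat_mul]
  ext i l
  simp [Fin.ext_iff]

lemma single_zero_mul_shiftMat [DecidableEq ι] (h : p ≤ q) (i : ι) (a : ℂ) :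
    single i (0 : Fin (p + 1)) a * shiftMat (Nat.add_le_add_right h 1) =
      single i (1 : Fin (q + 2)) a := by
  ext l j
  by_cases hl : i = l
  · subst hl
    simp [shiftMat, one_apply, single_apply]
  · simp [single_mul_apply_of_ne _ _ _ _ _ (Ne.symm hl), hl]

variable {k m n : ℕ}

lemma strictEquiv_cast_dsum_Lblk (hpk : p ≤ k)
    (hm : p + 1 + k = m) (hn : p + 1 + 1 + (k + 1) = n)
    (r : Fin m ≃ Fin p ⊕ Fin (k + 1)) (c : Fin n ≃ Fin (p + 1) ⊕ Fin (k + 1 + 1)) :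
    StrictEquiv (cast hm hn (dsum (Lblk (p + 1)) (Lblk k)))
      (ofEquiv r c (fromBlocks (Fmat p) 0 (single 0 0 1) (Fmat (k + 1)))
        (fromBlocks (Gmat p) 0 0 (Gmat (k + 1)))) := by
  rw [cast_dsum_eq_ofEquiv]
  simp only [Lblk, fromBlocks_Fmat_succ, fromBlocks_Gmat_succ]
  refine strictEquiv_fromBlocks_of_intertwine (Fmat_mul_shiftMat hpk) (Gmat_mul_shiftMat hpk)
    (shiftMat_mul_single_zero hpk 0 1) (Matrix.mul_zero _) ?_ ?_
    ((finSplit hm).trans (moveHead p k)) r ((finSplit hn).trans (moveHead (p + 1) (k + 1))) c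
  · rw [single_zero_mul_shiftMat hpk, sub_add_cancel]
  · rw [Matrix.zero_mul, add_zero]

theorem cast_dsum_Lblk_mem_closure_orbE (hpk : p ≤ k)
    (hm : p + 1 + k = m) (hn : p + 1 + 1 + (k + 1) = n)
    (hm' : p + (k + 1) = m) (hn' : p + 1 + (k + 1 + 1) = n) :
    cast hm' hn' (dsum (Lblk p) (Lblk (k + 1))) ∈
      closure (orbE (cast hm hn (dsum (Lblk (p + 1)) (Lblk k)))) := by
  rw [cast_dsum_eq_ofEquiv hm' hn']
  exact closure_mono (orbE_subset_orbE (strictEquiv_cast_dsum_Lblk hpk hm hn _ _))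
    (fromBlocks_zero_mem_closure_orbE _ _)

end KroneckerBlocks

end Pencil

/-- **Rule 1 transition as an orbit closure inclusion**: for `1 ≤ j ≤ k`,
`orbᶜ (M_{j-1} ⊕ M_{k+1}) ⊆ closure (orbᶜ (M_j ⊕ M_k))`. -/
theorem orbC_M_split_subset_closure (j k : ℕ) (hj : 1 ≤ j) (hjk : j ≤ k) :
    Pencil.orbC (Pencil.cast (by omega) (by omega)
        (Pencil.dsum (Mblk (j - 1)) (Mblk (k + 1))) :
          Pencil (2 * j + 2 * k + 2) (2 * j + 2 * k + 2)) ⊆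
      closure (Pencil.orbC (Pencil.cast (by omega) (by omega)
        (Pencil.dsum (Mblk j) (Mblk k)) :
          Pencil (2 * j + 2 * k + 2) (2 * j + 2 * k + 2))) := by
  obtain ⟨p, rfl⟩ : ∃ p, j = p + 1 := ⟨j - 1, by omega⟩
  have hL : Pencil.cast _ _ (Pencil.dsum (Lblk p) (Lblk (k + 1))) ∈
      closure (Pencil.orbE (Pencil.dsum (Lblk (p + 1)) (Lblk k))) :=
    Pencil.cast_dsum_Lblk_mem_closure_orbE (by omega) rfl rfl (by omega) (by omega)
  have hM := Pencil.orbC_dsum_skew_subset_closure (K := 2 * (p + 1) + 2 * k + 2)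
    rfl rfl _ _ hL (by omega) (by omega)
  simp only [Pencil.skew_Lblk] at hM
  exact hM
end
end
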